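/- arXiv:2005.12013 — 2 statements merged into one kernel-verified Lean document; each statement's English description precedes it below -/
import Mathlib

section
/- Let a, b ∈ ℝ with ab ≠ 0 and consider the piecewise linear vector field Z₀ = (X₀, Y₀) with X₀(x,y) = (ay, x) and Y₀(x,y) = (by, x). Then: (i) if a > 0 or b > 0, Z₀ has no crossing periodic orbit at all; (ii) if a < 0 and b < 0, then for every x₀ > 0 the set {(x,y) : y ≥ 0, x² − a y² = x₀²} ∪ {(x,y) : y ≤ 0, x² − b y² = x₀²} is the image of a crossing periodic orbit of Z₀, and every crossing periodic orbit of Z₀ has its image equal to such a set for some x₀ > 0. In particular, Z₀ has no limit cycle, i.e., no crossing periodic orbit whose image has a neighborhood containing the image of no other crossing periodic orbit. -/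
open Set Filter

noncomputable section


/-- A crossing periodic orbit of the piecewise smooth vector field `Z = (X, Y)`:
a nonconstant continuous periodic curve which solves `ẋ = X(x)` where `y > 0` and
`ẋ = Y(x)` where `y < 0`, meets the switching line `{y = 0}` in a discrete set of
times, and crosses it (`X₂ ⬝ Y₂ > 0`) at each such time. -/
def IsCrossingPeriodicOrbit (X Y : ℝ × ℝ → ℝ × ℝ) (γ : ℝ → ℝ × ℝ) : Prop :=
  Continuous γ ∧ (∃ T > 0, Function.Periodic γ T) ∧ (∃ t s : ℝ, γ t ≠ γ s) ∧
  (∀ t : ℝ, 0 < (γ t).2 → HasDerivAt γ (X (γ t)) t) ∧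
  (∀ t : ℝ, (γ t).2 < 0 → HasDerivAt γ (Y (γ t)) t) ∧
  (∀ t : ℝ, (γ t).2 = 0 → ∃ ε > 0, ∀ s : ℝ, s ≠ t → |s - t| < ε → (γ s).2 ≠ 0) ∧
  (∀ t : ℝ, (γ t).2 = 0 → (X (γ t)).2 * (Y (γ t)).2 > 0)

/-!
The two fields agree on the line `y = 0`, so a crossing periodic orbit is a global solution of the
Lipschitz system `ẋ = F(y)`, `ẏ = x`, where `F` has slope `a` on `[0, ∞)` and `b` on `(-∞, 0]`.

If `a > 0`, then `x` (when `b ≤ 0`) or `x y` (when `b > 0`) has nonnegative derivative along such an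
orbit; being periodic it is constant, which is absurd. The central symmetry exchanges `a` and `b`.

If `a = -α²` and `b = -β²`, then `(r cos θ, r sin θ / α)` for `sin θ ≥ 0` and
`(r cos θ, r sin θ / β)` for `sin θ ≤ 0` is an orbit as soon as the angle `θ` has speed `α` in the
first regime and `β` in the second. Every orbit meets the line `y = 0`, hence one of these orbits,
and by uniqueness of solutions has the same image. Finally, homotheties map orbits to orbits, so
none is isolated.
-/

open Function
open scoped Topology Pointwise

/-! ### Periodic functions and dilations -/

theorem eq_of_monotone_of_periodic {α β : Type*} [AddCommGroup α] [LinearOrder α]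
    [IsOrderedAddMonoid α] [Archimedean α] [PartialOrder β] {f : α → β} {c : α} (hc : 0 < c)
    (hper : Periodic f c) (hmono : Monotone f) (s t : α) : f s = f t := by
  have le (s t : α) : f s ≤ f t := by
    obtain ⟨n, hn⟩ := Archimedean.arch (s - t) hc
    calc f s ≤ f (t + n • c) := hmono (sub_le_iff_le_add'.mp hn)
      _ = f t := hper.nsmul n t
  exact (le s t).antisymm (le t s)

theorem eq_zero_of_hasDerivAt_of_periodic {f f' : ℝ → ℝ} {T : ℝ} (hT : 0 < T)
    (hper : Periodic f T) (hf : ∀ t, HasDerivAt f (f' t) t) (hf' : 0 ≤ f') : f' = 0 := by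
  funext t
  have hconst : f = fun _ => f t :=
    funext fun s => eq_of_monotone_of_periodic hT hper (monotone_of_hasDerivAt_nonneg hf hf') s t
  have hderiv := hf t
  rw [hconst] at hderiv
  exact hderiv.unique (hasDerivAt_const t _)

theorem subset_zero_of_isCompact_of_smul_subset {E : Type*} [NormedAddCommGroup E] [NormedSpace ℝ E]
    {K : Set E} (hK : IsCompact K) {l : ℝ} (hl : 1 < l) (hlK : l • K ⊆ K) : K ⊆ {0} := by
  intro q hq
  obtain ⟨p, hpK, hmax⟩ := hK.exists_isMaxOn ⟨q, hq⟩ continuous_norm.continuousOn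
  have hlp : l * ‖p‖ ≤ ‖p‖ := by
    simpa [norm_smul, abs_of_pos (one_pos.trans hl)] using hmax (hlK (smul_mem_smul_set hpK))
  have hp : ‖p‖ ≤ 0 := by nlinarith
  exact norm_le_zero_iff.mp ((hmax hq).trans hp)

theorem eventually_smul_subset_of_isCompact {M E : Type*} [Monoid M] [TopologicalSpace M]
    [TopologicalSpace E] [MulAction M E] [ContinuousSMul M E] {K V : Set E} (hK : IsCompact K)
    (hV : IsOpen V) (hKV : K ⊆ V) : ∀ᶠ l : M in 𝓝 1, l • K ⊆ V := by
  have hmem : ∀ᶠ l : M in 𝓝 1, ∀ p ∈ K, l • p ∈ V :=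
    hK.eventually_forall_of_forall_eventually fun p hp =>
      continuous_smul.continuousAt.eventually_mem (hV.mem_nhds (by simpa using hKV hp))
  filter_upwards [hmem] with l hl
  rintro _ ⟨p, hp, rfl⟩
  exact hl p hp

/-! ### Crossing periodic orbits -/

theorem hasDerivAt_of_eventually_hasDerivAt {E : Type*} [NormedAddCommGroup E] [NormedSpace ℝ E]
    {f g : ℝ → E} {x : ℝ} (hfg : ∀ᶠ y in 𝓝[≠] x, HasDerivAt f (g y) y) (hf : ContinuousAt f x)
    (hg : ContinuousAt g x) : HasDerivAt f (g x) x := by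
  have hdiff : DifferentiableOn ℝ f {y | HasDerivAt f (g y) y} :=
    fun y hy => hy.differentiableAt.differentiableWithinAt
  have hderiv : Tendsto (deriv f) (𝓝[≠] x) (𝓝 (g x)) :=
    (hg.tendsto.mono_left nhdsWithin_le_nhds).congr' (hfg.mono fun y hy => hy.deriv.symm)
  have hleft : HasDerivWithinAt f (g x) (Iic x) x :=
    hasDerivWithinAt_Iic_of_tendsto_deriv hdiff hf.continuousWithinAt
      (nhdsLT_le_nhdsNE x hfg) (hderiv.mono_left (nhdsLT_le_nhdsNE x))
  have hright : HasDerivWithinAt f (g x) (Ici x) x :=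
    hasDerivWithinAt_Ici_of_tendsto_deriv hdiff hf.continuousWithinAt
      (nhdsGT_le_nhdsNE x hfg) (hderiv.mono_left (nhdsGT_le_nhdsNE x))
  simpa [Iic_union_Ici] using hleft.union hright

namespace IsCrossingPeriodicOrbit

variable {X Y X' Y' W : ℝ × ℝ → ℝ × ℝ} {γ δ : ℝ → ℝ × ℝ}

theorem isCompact_range (hγ : IsCrossingPeriodicOrbit X Y γ) : IsCompact (range γ) := by
  obtain ⟨hcont, ⟨T, hT, hper⟩, -⟩ := hγ
  exact hper.image_Icc hT 0 ▸ isCompact_Icc.image hcont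

theorem eventually_snd_ne_zero (hγ : IsCrossingPeriodicOrbit X Y γ) (t : ℝ) :
    ∀ᶠ s in 𝓝[≠] t, (γ s).2 ≠ 0 := by
  obtain ⟨hcont, -, -, -, -, hdisc, -⟩ := hγ
  by_cases ht : (γ t).2 = 0
  · obtain ⟨ε, hε, hball⟩ := hdisc t ht
    filter_upwards [self_mem_nhdsWithin, mem_nhdsWithin_of_mem_nhds (Metric.ball_mem_nhds t hε)]
      with s hne hs using hball s hne hs
  · exact (hcont.snd.continuousAt.eventually_ne ht).filter_mono nhdsWithin_le_nhds

theorem hasDerivAt (hγ : IsCrossingPeriodicOrbit X Y γ) (hW : Continuous W)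
    (hX : EqOn W X {p | 0 < p.2}) (hY : EqOn W Y {p | p.2 < 0}) (t : ℝ) :
    HasDerivAt γ (W (γ t)) t := by
  refine hasDerivAt_of_eventually_hasDerivAt (g := W ∘ γ) ?_ hγ.1.continuousAt
    (hW.comp hγ.1).continuousAt
  filter_upwards [hγ.eventually_snd_ne_zero t] with s hs
  obtain ⟨-, -, -, hsolX, hsolY, -⟩ := hγ
  rcases hs.lt_or_gt with hneg | hpos
  · exact (hsolY s hneg).congr_deriv (hY hneg).symm
  · exact (hsolX s hpos).congr_deriv (hX hpos).symm

theorem range_eq_of_apply_eq {K : NNReal} (hγ : IsCrossingPeriodicOrbit X Y γ)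
    (hδ : IsCrossingPeriodicOrbit X Y δ) (hW : LipschitzWith K W) (hX : EqOn W X {p | 0 < p.2})
    (hY : EqOn W Y {p | p.2 < 0}) {t s : ℝ} (hts : γ t = δ s) : range γ = range δ := by
  have htranslate : (fun u => γ (u + t)) = fun u => δ (u + s) :=
    ODE_solution_unique_univ (v := fun _ => W) (s := fun _ => univ) (t₀ := 0)
      (fun _ => hW.lipschitzOnWith)
      (fun u => ⟨(hγ.hasDerivAt hW.continuous hX hY (u + t)).comp_add_const u t, mem_univ _⟩)
      (fun u => ⟨(hδ.hasDerivAt hW.continuous hX hY (u + s)).comp_add_const u s, mem_univ _⟩)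
      (by simpa using hts)
  calc range γ = range fun u => γ (u + t) := ((Equiv.addRight t).surjective.range_comp γ).symm
    _ = range fun u => δ (u + s) := by rw [htranslate]
    _ = range δ := (Equiv.addRight s).surjective.range_comp δ

theorem const_smul (hγ : IsCrossingPeriodicOrbit X Y γ) {l : ℝ} (hl : 0 < l)
    (hX : ∀ p, X' (l • p) = l • X p) (hY : ∀ p, Y' (l • p) = l • Y p) :
    IsCrossingPeriodicOrbit X' Y' (l • γ) := by
  obtain ⟨hcont, ⟨T, hT, hper⟩, ⟨t, s, hne⟩, hsolX, hsolY, hdisc, hcross⟩ := hγ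
  have hsnd (t : ℝ) : ((l • γ) t).2 = 0 ↔ (γ t).2 = 0 := smul_eq_zero_iff_right hl.ne'
  refine ⟨hcont.const_smul l, ⟨T, hT, hper.smul l⟩,
    ⟨t, s, fun h => hne (smul_right_injective _ hl.ne' h)⟩, fun t ht => ?_, fun t ht => ?_,
    fun t ht => ?_, fun t ht => ?_⟩
  · have hpos := (smul_pos_iff_of_pos_left hl).mp ht
    exact ((hsolX t hpos).const_smul l).congr_deriv (hX _).symm
  · have hneg := (smul_neg_iff_of_pos_left hl).mp ht
    exact ((hsolY t hneg).const_smul l).congr_deriv (hY _).symm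
  · simpa only [ne_eq, hsnd] using hdisc t ((hsnd t).mp ht)
  · simpa [hX, hY, mul_mul_mul_comm] using mul_pos (mul_pos hl hl) (hcross t ((hsnd t).mp ht))

theorem neg (hγ : IsCrossingPeriodicOrbit X Y γ) (hX : ∀ p, X' (-p) = -Y p)
    (hY : ∀ p, Y' (-p) = -X p) : IsCrossingPeriodicOrbit X' Y' (-γ) := by
  obtain ⟨hcont, ⟨T, hT, hper⟩, ⟨t, s, hne⟩, hsolX, hsolY, hdisc, hcross⟩ := hγ
  refine ⟨hcont.neg, ⟨T, hT, hper.comp Neg.neg⟩, ⟨t, s, fun h => hne (neg_injective h)⟩,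
    fun t ht => ?_, fun t ht => ?_, fun t ht => ?_, fun t ht => ?_⟩
  · exact (hsolY t (by simpa using ht)).neg.congr_deriv (hX _).symm
  · exact (hsolX t (by simpa using ht)).neg.congr_deriv (hY _).symm
  · simpa using hdisc t (by simpa using ht)
  · simpa [hX, hY, mul_comm] using hcross t (by simpa using ht)

theorem exists_range_ne_of_isOpen (hγ : IsCrossingPeriodicOrbit X Y γ)
    (hX : ∀ l > (0 : ℝ), ∀ p, X (l • p) = l • X p) (hY : ∀ l > (0 : ℝ), ∀ p, Y (l • p) = l • Y p)
    {V : Set (ℝ × ℝ)} (hV : IsOpen V) (hsub : range γ ⊆ V) :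
    ∃ δ, IsCrossingPeriodicOrbit X Y δ ∧ range δ ⊆ V ∧ range δ ≠ range γ := by
  have hlarge : ∀ᶠ l : ℝ in 𝓝[>] 1, l • range γ ⊆ V :=
    (eventually_smul_subset_of_isCompact hγ.isCompact_range hV hsub).filter_mono nhdsWithin_le_nhds
  obtain ⟨l, hlV, hl⟩ := (hlarge.and self_mem_nhdsWithin).exists
  have hl0 : 0 < l := one_pos.trans hl
  have hrange : range (l • γ) = l • range γ := (smul_set_range l γ).symm
  refine ⟨l • γ, hγ.const_smul hl0 (hX l hl0) (hY l hl0), hrange ▸ hlV, fun heq => ?_⟩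
  have hzero : range γ ⊆ {0} :=
    subset_zero_of_isCompact_of_smul_subset hγ.isCompact_range hl (hrange ▸ heq).subset
  obtain ⟨-, -, ⟨t, s, hne⟩, -⟩ := hγ
  exact hne ((hzero (mem_range_self t)).trans (hzero (mem_range_self s)).symm)

end IsCrossingPeriodicOrbit

/-! ### The glued field -/

/-- The piecewise linear function of slope `a` on `[0, ∞)` and `b` on `(-∞, 0]`. It serves both as
the force of the glued field and, with the inverse slopes, to parametrize the orbits. -/
def kink (a b y : ℝ) : ℝ := a * max y 0 + b * min y 0

section Kink

variable {a b y : ℝ}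

theorem kink_of_nonneg (hy : 0 ≤ y) : kink a b y = a * y := by simp [kink, hy]

theorem kink_of_nonpos (hy : y ≤ 0) : kink a b y = b * y := by simp [kink, hy]

theorem kink_zero : kink a b 0 = 0 := by simp [kink]

theorem exists_lipschitzWith_kink (a b : ℝ) : ∃ K, LipschitzWith K (kink a b) :=
  ⟨_, ((lipschitzWith_smul a).comp (LipschitzWith.id.max_const 0)).add
    ((lipschitzWith_smul b).comp (LipschitzWith.id.min_const 0))⟩

theorem continuous_kink : Continuous (kink a b) :=
  (exists_lipschitzWith_kink a b).choose_spec.continuous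

theorem hasDerivAt_kink_of_pos (hy : 0 < y) : HasDerivAt (kink a b) a y := by
  have hlin : HasDerivAt (fun z => a * z) a y := by simpa using (hasDerivAt_id y).const_mul a
  exact hlin.congr_of_eventuallyEq <|
    (lt_mem_nhds hy).mono fun z hz => kink_of_nonneg (le_of_lt hz)

theorem hasDerivAt_kink_of_neg (hy : y < 0) : HasDerivAt (kink a b) b y := by
  have hlin : HasDerivAt (fun z => b * z) b y := by simpa using (hasDerivAt_id y).const_mul b
  exact hlin.congr_of_eventuallyEq <|
    (gt_mem_nhds hy).mono fun z hz => kink_of_nonpos (le_of_lt hz)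

theorem strictMono_kink (ha : 0 < a) (hb : 0 < b) : StrictMono (kink a b) := by
  have hneg : StrictMonoOn (kink a b) (Iic 0) := fun x hx y hy hxy => by
    simpa only [kink_of_nonpos hx, kink_of_nonpos hy] using mul_lt_mul_of_pos_left hxy hb
  have hpos : StrictMonoOn (kink a b) (Ici 0) := fun x hx y hy hxy => by
    simpa only [kink_of_nonneg hx, kink_of_nonneg hy] using mul_lt_mul_of_pos_left hxy ha
  exact hneg.Iic_union_Ici hpos

theorem kink_pos_iff (ha : 0 < a) (hb : 0 < b) : 0 < kink a b y ↔ 0 < y := by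
  simpa only [kink_zero] using (strictMono_kink ha hb).lt_iff_lt (a := 0) (b := y)

theorem kink_neg_iff (ha : 0 < a) (hb : 0 < b) : kink a b y < 0 ↔ y < 0 := by
  simpa only [kink_zero] using (strictMono_kink ha hb).lt_iff_lt (a := y) (b := 0)

theorem kink_eq_zero_iff (ha : 0 < a) (hb : 0 < b) : kink a b y = 0 ↔ y = 0 := by
  simpa only [kink_zero] using (strictMono_kink ha hb).injective.eq_iff (a := y) (b := 0)

theorem kink_kink_inv (ha : 0 < a) (hb : 0 < b) : kink a b (kink a⁻¹ b⁻¹ y) = y := by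
  rcases le_total 0 y with hy | hy
  · rw [kink_of_nonneg hy, kink_of_nonneg (by positivity), mul_inv_cancel_left₀ ha.ne']
  · rw [kink_of_nonpos hy,
      kink_of_nonpos (mul_nonpos_of_nonneg_of_nonpos (inv_pos.mpr hb).le hy),
      mul_inv_cancel_left₀ hb.ne']

end Kink

/-- The linear field `(x, y) ↦ (c y, x)`, that is, the second order equation `ÿ = c y`. -/
def oscillatorField (c : ℝ) (p : ℝ × ℝ) : ℝ × ℝ := (c * p.2, p.1)

/-- The common extension of `oscillatorField a` on the upper and `oscillatorField b` on the lower
half-plane; it is single-valued on `y = 0` because the fields agree there. -/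
def gluedField (a b : ℝ) (p : ℝ × ℝ) : ℝ × ℝ := (kink a b p.2, p.1)

section Fields

variable {a b c : ℝ}

theorem oscillatorField_smul (l : ℝ) (p : ℝ × ℝ) :
    oscillatorField c (l • p) = l • oscillatorField c p :=
  Prod.ext (mul_left_comm c l p.2) rfl

theorem oscillatorField_neg (p : ℝ × ℝ) : oscillatorField c (-p) = -oscillatorField c p :=
  Prod.ext (mul_neg c p.2) rfl

theorem exists_lipschitzWith_gluedField (a b : ℝ) : ∃ K, LipschitzWith K (gluedField a b) :=
  let ⟨_, hK⟩ := exists_lipschitzWith_kink a b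
  ⟨_, (hK.comp LipschitzWith.prod_snd).prodMk LipschitzWith.prod_fst⟩

theorem eqOn_gluedField_upper : EqOn (gluedField a b) (oscillatorField a) {p | 0 < p.2} :=
  fun _ hp => Prod.ext (kink_of_nonneg (le_of_lt hp)) rfl

theorem eqOn_gluedField_lower : EqOn (gluedField a b) (oscillatorField b) {p | p.2 < 0} :=
  fun _ hp => Prod.ext (kink_of_nonpos (le_of_lt hp)) rfl

end Fields

namespace IsCrossingPeriodicOrbit

variable {a b : ℝ} {γ : ℝ → ℝ × ℝ}

theorem hasDerivAt_gluedField
    (hγ : IsCrossingPeriodicOrbit (oscillatorField a) (oscillatorField b) γ) (t : ℝ) :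
    HasDerivAt γ (gluedField a b (γ t)) t :=
  let ⟨_, hK⟩ := exists_lipschitzWith_gluedField a b
  hγ.hasDerivAt hK.continuous eqOn_gluedField_upper eqOn_gluedField_lower t

theorem hasDerivAt_fst
    (hγ : IsCrossingPeriodicOrbit (oscillatorField a) (oscillatorField b) γ) (t : ℝ) :
    HasDerivAt (fun t => (γ t).1) (kink a b (γ t).2) t :=
  (hγ.hasDerivAt_gluedField t).fst

theorem hasDerivAt_snd
    (hγ : IsCrossingPeriodicOrbit (oscillatorField a) (oscillatorField b) γ) (t : ℝ) :
    HasDerivAt (fun t => (γ t).2) (γ t).1 t :=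
  (hγ.hasDerivAt_gluedField t).snd

theorem neg_oscillatorField
    (hγ : IsCrossingPeriodicOrbit (oscillatorField a) (oscillatorField b) γ) :
    IsCrossingPeriodicOrbit (oscillatorField b) (oscillatorField a) (-γ) :=
  hγ.neg oscillatorField_neg oscillatorField_neg

theorem fst_ne_zero (hγ : IsCrossingPeriodicOrbit (oscillatorField a) (oscillatorField b) γ)
    {t : ℝ} (ht : (γ t).2 = 0) : (γ t).1 ≠ 0 := by
  obtain ⟨-, -, -, -, -, -, hcross⟩ := hγ
  exact left_ne_zero_of_mul (hcross t ht).ne'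

theorem exists_fst_ne (hγ : IsCrossingPeriodicOrbit (oscillatorField a) (oscillatorField b) γ) :
    ∃ t s, (γ t).1 ≠ (γ s).1 := by
  by_contra! hfst
  have hderiv (t : ℝ) : HasDerivAt (fun t => (γ t).2) (γ 0).1 t := hfst t 0 ▸ hγ.hasDerivAt_snd t
  obtain ⟨-, ⟨T, hT, hper⟩, ⟨t, s, hne⟩, -⟩ := hγ
  have hsnd : (γ t).2 = (γ s).2 := by
    rcases le_total 0 (γ 0).1 with h0 | h0
    · exact eq_of_monotone_of_periodic hT (hper.comp Prod.snd)
        (monotone_of_hasDerivAt_nonneg hderiv fun _ => h0) t s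
    · exact eq_of_monotone_of_periodic (β := ℝᵒᵈ) hT (hper.comp Prod.snd)
        (antitone_of_hasDerivAt_nonpos hderiv fun _ => h0).dual_right t s
  exact hne (Prod.ext (hfst t s) hsnd)

theorem not_monotone_fst
    (hγ : IsCrossingPeriodicOrbit (oscillatorField a) (oscillatorField b) γ) :
    ¬ Monotone fun t => (γ t).1 := by
  intro hmono
  obtain ⟨t, s, hne⟩ := hγ.exists_fst_ne
  obtain ⟨-, ⟨T, hT, hper⟩, -⟩ := hγ
  exact hne (eq_of_monotone_of_periodic hT (hper.comp Prod.fst) hmono t s)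

theorem not_antitone_fst
    (hγ : IsCrossingPeriodicOrbit (oscillatorField a) (oscillatorField b) γ) :
    ¬ Antitone fun t => (γ t).1 :=
  fun hanti => hγ.neg_oscillatorField.not_monotone_fst hanti.neg

theorem exists_snd_nonpos
    (hγ : IsCrossingPeriodicOrbit (oscillatorField a) (oscillatorField b) γ) :
    ∃ t, (γ t).2 ≤ 0 := by
  by_contra! hpos
  have hderiv (t : ℝ) : HasDerivAt (fun t => (γ t).1) (a * (γ t).2) t :=
    kink_of_nonneg (hpos t).le ▸ hγ.hasDerivAt_fst t
  rcases le_total 0 a with ha | ha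
  · exact hγ.not_monotone_fst
      (monotone_of_hasDerivAt_nonneg hderiv fun t => mul_nonneg ha (hpos t).le)
  · exact hγ.not_antitone_fst (antitone_of_hasDerivAt_nonpos hderiv fun t =>
      mul_nonpos_of_nonpos_of_nonneg ha (hpos t).le)

theorem exists_snd_eq_zero
    (hγ : IsCrossingPeriodicOrbit (oscillatorField a) (oscillatorField b) γ) :
    ∃ t, (γ t).2 = 0 := by
  obtain ⟨s, hs⟩ := hγ.neg_oscillatorField.exists_snd_nonpos
  exact mem_range_of_exists_le_of_exists_ge hγ.1.snd hγ.exists_snd_nonpos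
    ⟨s, by simpa using hs⟩

end IsCrossingPeriodicOrbit

theorem not_isCrossingPeriodicOrbit_of_pos {a b : ℝ} (hab : 0 < a ∨ 0 < b) (γ : ℝ → ℝ × ℝ) :
    ¬ IsCrossingPeriodicOrbit (oscillatorField a) (oscillatorField b) γ := by
  intro hγ
  wlog ha : 0 < a generalizing a b γ
  · exact this hab.symm (-γ) hγ.neg_oscillatorField (hab.resolve_left ha)
  rcases le_or_gt b 0 with hb | hb
  · refine hγ.not_monotone_fst (monotone_of_hasDerivAt_nonneg hγ.hasDerivAt_fst fun t => ?_)
    exact add_nonneg (mul_nonneg ha.le (le_max_right _ _))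
      (mul_nonneg_of_nonpos_of_nonpos hb (min_le_right _ _))
  · obtain ⟨t, ht⟩ := hγ.exists_snd_eq_zero
    have hderiv (t : ℝ) : HasDerivAt (fun t => (γ t).1 * (γ t).2)
        (kink a b (γ t).2 * (γ t).2 + (γ t).1 * (γ t).1) t :=
      (hγ.hasDerivAt_fst t).mul (hγ.hasDerivAt_snd t)
    have hnonneg (y : ℝ) : 0 ≤ kink a b y * y := by
      rcases le_total 0 y with hy | hy
      · exact mul_nonneg (kink_of_nonneg hy ▸ mul_nonneg ha.le hy) hy
      · exact mul_nonneg_of_nonpos_of_nonpos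
          (kink_of_nonpos hy ▸ mul_nonpos_of_nonneg_of_nonpos hb.le hy) hy
    obtain ⟨T, hT, hper⟩ := hγ.2.1
    have hzero := congrFun (eq_zero_of_hasDerivAt_of_periodic hT
      (hper.comp fun p => p.1 * p.2) hderiv
      fun t => add_nonneg (hnonneg _) (mul_self_nonneg _)) t
    exact hγ.fst_ne_zero ht (by simpa [ht] using hzero)

/-! ### Motion with prescribed speed -/

/-- The time needed to travel from `0` to `x` when the speed at `y` is `v y`. -/
def travelTime (v : ℝ → ℝ) (x : ℝ) : ℝ := ∫ y in (0 : ℝ)..x, (v y)⁻¹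

section TravelTime

variable {v : ℝ → ℝ} {m M T : ℝ}

theorem intervalIntegrable_inv_of_le (hv : Measurable v) (hm : 0 < m) (hmv : ∀ x, m ≤ v x)
    (x y : ℝ) : IntervalIntegrable (fun z => (v z)⁻¹) MeasureTheory.volume x y := by
  refine (intervalIntegrable_const (c := m⁻¹)).mono_fun' hv.inv.aestronglyMeasurable
    (Eventually.of_forall fun z => ?_)
  exact (Real.norm_of_nonneg (inv_nonneg.mpr (hm.le.trans (hmv z)))).trans_le
    (inv_anti₀ hm (hmv z))

theorem div_le_travelTime_sub (hv : Measurable v) (hm : 0 < m) (hmv : ∀ x, m ≤ v x)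
    (hvM : ∀ x, v x ≤ M) {x y : ℝ} (hxy : x ≤ y) :
    (y - x) / M ≤ travelTime v y - travelTime v x := by
  have hint := intervalIntegrable_inv_of_le hv hm hmv
  calc (y - x) / M = ∫ _ in x..y, M⁻¹ := by
        rw [intervalIntegral.integral_const, smul_eq_mul, div_eq_mul_inv]
    _ ≤ ∫ z in x..y, (v z)⁻¹ :=
        intervalIntegral.integral_mono_on hxy intervalIntegrable_const (hint x y)
          fun z _ => inv_anti₀ (hm.trans_le (hmv z)) (hvM z)
    _ = travelTime v y - travelTime v x :=
        (intervalIntegral.integral_interval_sub_left (hint 0 y) (hint 0 x)).symm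

theorem continuous_travelTime (hv : Measurable v) (hm : 0 < m) (hmv : ∀ x, m ≤ v x) :
    Continuous (travelTime v) :=
  intervalIntegral.continuous_primitive (intervalIntegrable_inv_of_le hv hm hmv) 0

theorem strictMono_travelTime (hv : Measurable v) (hm : 0 < m) (hmv : ∀ x, m ≤ v x)
    (hvM : ∀ x, v x ≤ M) : StrictMono (travelTime v) := fun x y hxy => by
  have hM : 0 < M := hm.trans_le ((hmv 0).trans (hvM 0))
  have hpos : 0 < (y - x) / M := div_pos (sub_pos.mpr hxy) hM
  exact sub_pos.mp (hpos.trans_le (div_le_travelTime_sub hv hm hmv hvM hxy.le))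

theorem surjective_travelTime (hv : Measurable v) (hm : 0 < m) (hmv : ∀ x, m ≤ v x)
    (hvM : ∀ x, v x ≤ M) : Surjective (travelTime v) := by
  have hM : 0 < M := hm.trans_le ((hmv 0).trans (hvM 0))
  have hzero : travelTime v 0 = 0 := intervalIntegral.integral_same
  intro t
  have hdist : 0 ≤ M * |t| := by positivity
  have hupper := div_le_travelTime_sub hv hm hmv hvM hdist
  have hlower := div_le_travelTime_sub hv hm hmv hvM (neg_nonpos.mpr hdist)
  rw [hzero, sub_zero, sub_zero, mul_div_cancel_left₀ _ hM.ne'] at hupper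
  rw [hzero, zero_sub, zero_sub, neg_neg, mul_div_cancel_left₀ _ hM.ne'] at hlower
  exact mem_range_of_exists_le_of_exists_ge (continuous_travelTime hv hm hmv)
    ⟨_, (le_neg_of_le_neg hlower).trans (neg_abs_le t)⟩ ⟨_, (le_abs_self t).trans hupper⟩

theorem travelTime_add_period (hv : Measurable v) (hm : 0 < m) (hmv : ∀ x, m ≤ v x)
    (hper : Periodic v T) (x : ℝ) : travelTime v (x + T) = travelTime v x + travelTime v T := by
  have hadd := (hper.comp Inv.inv).intervalIntegral_add_eq_add 0 x
    (intervalIntegrable_inv_of_le hv hm hmv)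
  rwa [zero_add] at hadd

theorem hasDerivAt_travelTime (hv : Measurable v) (hm : 0 < m) (hmv : ∀ x, m ≤ v x) {x : ℝ}
    (hx : ContinuousAt v x) : HasDerivAt (travelTime v) (v x)⁻¹ x :=
  intervalIntegral.integral_hasDerivAt_right (intervalIntegrable_inv_of_le hv hm hmv 0 x)
    hv.inv.stronglyMeasurable.stronglyMeasurableAtFilter (hx.inv₀ (hm.trans_le (hmv x)).ne')

theorem exists_orderIso_hasDerivAt_of_periodic (hv : Measurable v) (hm : 0 < m)
    (hmv : ∀ x, m ≤ v x) (hvM : ∀ x, v x ≤ M) (hT : 0 < T) (hper : Periodic v T) :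
    ∃ θ : ℝ ≃o ℝ, (∃ S > 0, ∀ t, θ (t + S) = θ t + T) ∧
      ∀ t, ContinuousAt v (θ t) → HasDerivAt θ (v (θ t)) t := by
  have hmono := strictMono_travelTime hv hm hmv hvM
  set τ : ℝ ≃o ℝ := hmono.orderIsoOfSurjective _ (surjective_travelTime hv hm hmv hvM)
  have hτ (t : ℝ) : travelTime v (τ.symm t) = t := τ.apply_symm_apply t
  have hperiod : 0 < travelTime v T := intervalIntegral.integral_same.symm.trans_lt (hmono hT)
  refine ⟨τ.symm, ⟨travelTime v T, hperiod, fun t => hmono.injective ?_⟩, fun t ht => ?_⟩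
  · rw [hτ, travelTime_add_period hv hm hmv hper, hτ]
  · have hvpos : 0 < v (τ.symm t) := hm.trans_le (hmv _)
    simpa only [inv_inv] using (hasDerivAt_travelTime hv hm hmv ht).of_local_left_inverse
      τ.symm.continuous.continuousAt (inv_ne_zero hvpos.ne') (Eventually.of_forall hτ)

end TravelTime

theorem exists_orderIso_hasDerivAt_of_sin {α β : ℝ} (hα : 0 < α) (hβ : 0 < β) :
    ∃ θ : ℝ ≃o ℝ, (∃ S > 0, ∀ t, θ (t + S) = θ t + 2 * Real.pi) ∧
      (∀ t, 0 < Real.sin (θ t) → HasDerivAt θ α t) ∧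
      (∀ t, Real.sin (θ t) < 0 → HasDerivAt θ β t) := by
  set v : ℝ → ℝ := fun x => if 0 ≤ Real.sin x then α else β
  have hmeas : Measurable v :=
    Measurable.ite (measurableSet_le measurable_const Real.measurable_sin)
      measurable_const measurable_const
  have hper : Periodic v (2 * Real.pi) := fun x => by simp only [v, Real.sin_add_two_pi]
  obtain ⟨θ, hθper, hθ⟩ := exists_orderIso_hasDerivAt_of_periodic (m := min α β) (M := max α β)
    hmeas (lt_min hα hβ) (fun x => by grind) (fun x => by grind) Real.two_pi_pos hper
  refine ⟨θ, hθper, fun t ht => ?_, fun t ht => ?_⟩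
  · have hloc : v =ᶠ[𝓝 (θ t)] fun _ => α := by
      filter_upwards [Real.continuous_sin.continuousAt.eventually (lt_mem_nhds ht)]
        with x hx using if_pos hx.le
    exact hloc.eq_of_nhds ▸ hθ t (continuousAt_const.congr hloc.symm)
  · have hloc : v =ᶠ[𝓝 (θ t)] fun _ => β := by
      filter_upwards [Real.continuous_sin.continuousAt.eventually (gt_mem_nhds ht)]
        with x hx using if_neg hx.not_ge
    exact hloc.eq_of_nhds ▸ hθ t (continuousAt_const.congr hloc.symm)

/-! ### The orbits -/

/-- The union of the upper half of the conic `x² - a y² = r²` and the lower half of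
`x² - b y² = r²`; the candidate orbit through `(r, 0)`. -/
def gluedConic (a b r : ℝ) : Set (ℝ × ℝ) :=
  {p | 0 ≤ p.2 ∧ p.1 ^ 2 - a * p.2 ^ 2 = r ^ 2} ∪ {p | p.2 ≤ 0 ∧ p.1 ^ 2 - b * p.2 ^ 2 = r ^ 2}

/-- The point of `gluedConic (-α ^ 2) (-β ^ 2) r` with eccentric angle `φ`. -/
def gluedEllipsePoint (α β r φ : ℝ) : ℝ × ℝ :=
  (r * Real.cos φ, kink α⁻¹ β⁻¹ (r * Real.sin φ))

section GluedEllipse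

variable {α β r : ℝ}

theorem mem_gluedConic_neg_sq_iff {p : ℝ × ℝ} :
    p ∈ gluedConic (-α ^ 2) (-β ^ 2) r ↔ p.1 ^ 2 + kink α β p.2 ^ 2 = r ^ 2 := by
  simp only [gluedConic, mem_union, mem_ofPred_eq, neg_mul, sub_neg_eq_add, ← mul_pow]
  constructor
  · rintro (⟨hy, h⟩ | ⟨hy, h⟩)
    · rwa [kink_of_nonneg hy]
    · rwa [kink_of_nonpos hy]
  · intro h
    rcases le_total 0 p.2 with hy | hy
    · exact Or.inl ⟨hy, kink_of_nonneg hy ▸ h⟩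
    · exact Or.inr ⟨hy, kink_of_nonpos hy ▸ h⟩

theorem exists_polar_of_sq_add_sq_eq_sq (hr : 0 ≤ r) {x y : ℝ} (h : x ^ 2 + y ^ 2 = r ^ 2) :
    ∃ φ, x = r * Real.cos φ ∧ y = r * Real.sin φ := by
  have hnorm : ‖(⟨x, y⟩ : ℂ)‖ = r := by
    rw [Complex.norm_eq_sqrt_sq_add_sq, h, Real.sqrt_sq hr]
  refine ⟨Complex.arg ⟨x, y⟩, ?_, ?_⟩
  · rw [← hnorm, Complex.norm_mul_cos_arg]
  · rw [← hnorm, Complex.norm_mul_sin_arg]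

theorem range_gluedEllipsePoint (hα : 0 < α) (hβ : 0 < β) (hr : 0 ≤ r) :
    range (gluedEllipsePoint α β r) = gluedConic (-α ^ 2) (-β ^ 2) r := by
  ext ⟨x, y⟩
  rw [mem_gluedConic_neg_sq_iff]
  constructor
  · rintro ⟨φ, hφ⟩
    rw [← hφ, gluedEllipsePoint, kink_kink_inv hα hβ, mul_pow, mul_pow, ← mul_add,
      Real.cos_sq_add_sin_sq, mul_one]
  · intro h
    obtain ⟨φ, hx, hy⟩ := exists_polar_of_sq_add_sq_eq_sq hr h
    refine ⟨φ, Prod.ext hx.symm ((strictMono_kink hα hβ).injective ?_)⟩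
    exact (kink_kink_inv hα hβ).trans hy.symm

theorem continuous_gluedEllipsePoint : Continuous (gluedEllipsePoint α β r) :=
  (Real.continuous_cos.const_mul r).prodMk (continuous_kink.comp (Real.continuous_sin.const_mul r))

theorem gluedEllipsePoint_add_two_pi (φ : ℝ) :
    gluedEllipsePoint α β r (φ + 2 * Real.pi) = gluedEllipsePoint α β r φ := by
  simp only [gluedEllipsePoint, Real.cos_add_two_pi, Real.sin_add_two_pi]

theorem gluedEllipsePoint_zero_ne_pi (hr : 0 < r) :
    gluedEllipsePoint α β r 0 ≠ gluedEllipsePoint α β r Real.pi := fun h => by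
  have hfst := congrArg Prod.fst h
  simp only [gluedEllipsePoint, Real.cos_zero, Real.cos_pi] at hfst
  linarith

theorem gluedEllipsePoint_snd_pos_iff (hα : 0 < α) (hβ : 0 < β) (hr : 0 < r) {φ : ℝ} :
    0 < (gluedEllipsePoint α β r φ).2 ↔ 0 < Real.sin φ :=
  (kink_pos_iff (inv_pos.mpr hα) (inv_pos.mpr hβ)).trans (mul_pos_iff_of_pos_left hr)

theorem gluedEllipsePoint_snd_neg_iff (hα : 0 < α) (hβ : 0 < β) (hr : 0 < r) {φ : ℝ} :
    (gluedEllipsePoint α β r φ).2 < 0 ↔ Real.sin φ < 0 :=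
  (kink_neg_iff (inv_pos.mpr hα) (inv_pos.mpr hβ)).trans (smul_neg_iff_of_pos_left hr)

theorem gluedEllipsePoint_snd_eq_zero_iff (hα : 0 < α) (hβ : 0 < β) (hr : r ≠ 0) {φ : ℝ} :
    (gluedEllipsePoint α β r φ).2 = 0 ↔ Real.sin φ = 0 :=
  (kink_eq_zero_iff (inv_pos.mpr hα) (inv_pos.mpr hβ)).trans (mul_eq_zero_iff_left hr)

theorem hasDerivAt_gluedEllipsePoint_of_sin_pos (hα : 0 < α) (hr : 0 < r) {θ : ℝ → ℝ} {t : ℝ}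
    (hsin : 0 < Real.sin (θ t)) (hθ : HasDerivAt θ α t) :
    HasDerivAt (fun t => gluedEllipsePoint α β r (θ t))
      (oscillatorField (-α ^ 2) (gluedEllipsePoint α β r (θ t))) t := by
  have hpos : 0 < r * Real.sin (θ t) := mul_pos hr hsin
  refine ((hθ.cos.const_mul r).prodMk
    ((hasDerivAt_kink_of_pos hpos).comp t (hθ.sin.const_mul r))).congr_deriv ?_
  simp only [oscillatorField, gluedEllipsePoint, kink_of_nonneg hpos.le]
  ext <;> field_simp

theorem hasDerivAt_gluedEllipsePoint_of_sin_neg (hβ : 0 < β) (hr : 0 < r) {θ : ℝ → ℝ} {t : ℝ}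
    (hsin : Real.sin (θ t) < 0) (hθ : HasDerivAt θ β t) :
    HasDerivAt (fun t => gluedEllipsePoint α β r (θ t))
      (oscillatorField (-β ^ 2) (gluedEllipsePoint α β r (θ t))) t := by
  have hneg : r * Real.sin (θ t) < 0 := mul_neg_of_pos_of_neg hr hsin
  refine ((hθ.cos.const_mul r).prodMk
    ((hasDerivAt_kink_of_neg hneg).comp t (hθ.sin.const_mul r))).congr_deriv ?_
  simp only [oscillatorField, gluedEllipsePoint, kink_of_nonpos hneg.le]
  ext <;> field_simp

theorem cos_ne_zero_of_sin_eq_zero {φ : ℝ} (hφ : Real.sin φ = 0) : Real.cos φ ≠ 0 := fun hcos => by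
  simpa [hφ, hcos] using Real.sin_sq_add_cos_sq φ

theorem eventually_sin_ne_zero {φ : ℝ} (hφ : Real.sin φ = 0) :
    ∀ᶠ ψ in 𝓝[≠] φ, Real.sin ψ ≠ 0 :=
  (Real.hasDerivAt_sin φ).eventually_ne (cos_ne_zero_of_sin_eq_zero hφ)

theorem exists_isCrossingPeriodicOrbit_neg_sq (hα : 0 < α) (hβ : 0 < β) (hr : 0 < r) :
    ∃ γ, IsCrossingPeriodicOrbit (oscillatorField (-α ^ 2)) (oscillatorField (-β ^ 2)) γ ∧
      range γ = gluedConic (-α ^ 2) (-β ^ 2) r := by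
  obtain ⟨θ, ⟨S, hS, hper⟩, hpos, hneg⟩ := exists_orderIso_hasDerivAt_of_sin hα hβ
  have hsnd (t : ℝ) : (gluedEllipsePoint α β r (θ t)).2 = 0 ↔ Real.sin (θ t) = 0 :=
    gluedEllipsePoint_snd_eq_zero_iff hα hβ hr.ne'
  refine ⟨fun t => gluedEllipsePoint α β r (θ t), ⟨?_, ⟨S, hS, fun t => ?_⟩, ?_, fun t ht => ?_,
    fun t ht => ?_, fun t ht => ?_, fun t ht => ?_⟩, ?_⟩
  · exact continuous_gluedEllipsePoint.comp θ.continuous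
  · simp only [hper, gluedEllipsePoint_add_two_pi]
  · refine ⟨θ.symm 0, θ.symm Real.pi, ?_⟩
    simpa only [θ.apply_symm_apply] using gluedEllipsePoint_zero_ne_pi hr
  · have hsin := (gluedEllipsePoint_snd_pos_iff hα hβ hr).mp ht
    exact hasDerivAt_gluedEllipsePoint_of_sin_pos hα hr hsin (hpos t hsin)
  · have hsin := (gluedEllipsePoint_snd_neg_iff hα hβ hr).mp ht
    exact hasDerivAt_gluedEllipsePoint_of_sin_neg hβ hr hsin (hneg t hsin)
  · have htendsto : Tendsto θ (𝓝[≠] t) (𝓝[≠] θ t) :=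
      (θ.toHomeomorph.map_punctured_nhds_eq t).le
    have hne : ∀ᶠ s in 𝓝[≠] t, Real.sin (θ s) ≠ 0 :=
      htendsto.eventually (eventually_sin_ne_zero ((hsnd t).mp ht))
    obtain ⟨ε, hε, hball⟩ := Metric.eventually_nhds_iff.mp (eventually_nhdsWithin_iff.mp hne)
    exact ⟨ε, hε, fun s hst hs h => hball hs hst ((hsnd s).mp h)⟩
  · exact mul_self_pos.mpr
      (mul_ne_zero hr.ne' (cos_ne_zero_of_sin_eq_zero ((hsnd t).mp ht)))
  · rw [← range_gluedEllipsePoint hα hβ hr.le]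
    exact θ.surjective.range_comp (gluedEllipsePoint α β r)

end GluedEllipse

section NegativeSlopes

variable {a b r : ℝ}

theorem exists_isCrossingPeriodicOrbit_range_eq (ha : a < 0) (hb : b < 0) (hr : 0 < r) :
    ∃ γ, IsCrossingPeriodicOrbit (oscillatorField a) (oscillatorField b) γ ∧
      range γ = gluedConic a b r := by
  obtain ⟨α, hα, rfl⟩ : ∃ α > 0, a = -α ^ 2 :=
    ⟨√(-a), Real.sqrt_pos.mpr (neg_pos.mpr ha), by rw [Real.sq_sqrt (neg_pos.mpr ha).le, neg_neg]⟩
  obtain ⟨β, hβ, rfl⟩ : ∃ β > 0, b = -β ^ 2 :=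
    ⟨√(-b), Real.sqrt_pos.mpr (neg_pos.mpr hb), by rw [Real.sq_sqrt (neg_pos.mpr hb).le, neg_neg]⟩
  exact exists_isCrossingPeriodicOrbit_neg_sq hα hβ hr

theorem IsCrossingPeriodicOrbit.exists_range_eq_gluedConic {γ : ℝ → ℝ × ℝ}
    (hγ : IsCrossingPeriodicOrbit (oscillatorField a) (oscillatorField b) γ) (ha : a < 0)
    (hb : b < 0) :
    ∃ r > 0, range γ = gluedConic a b r := by
  obtain ⟨t, ht⟩ := hγ.exists_snd_eq_zero
  have hr : 0 < |(γ t).1| := abs_pos.mpr (hγ.fst_ne_zero ht)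
  obtain ⟨δ, hδ, hrange⟩ := exists_isCrossingPeriodicOrbit_range_eq ha hb hr
  have hmem : γ t ∈ range δ := hrange ▸ Or.inl ⟨ht.ge, by simp [ht]⟩
  obtain ⟨s, hs⟩ := hmem
  obtain ⟨K, hK⟩ := exists_lipschitzWith_gluedField a b
  refine ⟨_, hr, ?_⟩
  rw [← hrange]
  exact hγ.range_eq_of_apply_eq hδ hK eqOn_gluedField_upper eqOn_gluedField_lower hs.symm

end NegativeSlopes

/-- The piecewise linear vector field `Z₀ = ((ay, x), (by, x))`, `ab ≠ 0`: if `a > 0` or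
`b > 0` it has no crossing periodic orbit; if `a < 0` and `b < 0` its crossing periodic
orbits are exactly the curves `{y ≥ 0, x² − ay² = x₀²} ∪ {y ≤ 0, x² − by² = x₀²}`,
`x₀ > 0`. In particular `Z₀` has no limit cycle (no isolated crossing periodic orbit). -/
theorem stmt12 (a b : ℝ) (hab : a * b ≠ 0) :
    ((0 < a ∨ 0 < b) →
      ¬ ∃ γ : ℝ → ℝ × ℝ, IsCrossingPeriodicOrbit
        (fun p : ℝ × ℝ => (a * p.2, p.1)) (fun p : ℝ × ℝ => (b * p.2, p.1)) γ) ∧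
    ((a < 0 ∧ b < 0) →
      (∀ x₀ : ℝ, 0 < x₀ → ∃ γ : ℝ → ℝ × ℝ,
        IsCrossingPeriodicOrbit
          (fun p : ℝ × ℝ => (a * p.2, p.1)) (fun p : ℝ × ℝ => (b * p.2, p.1)) γ ∧
        Set.range γ =
          {p : ℝ × ℝ | 0 ≤ p.2 ∧ p.1 ^ 2 - a * p.2 ^ 2 = x₀ ^ 2} ∪
          {p : ℝ × ℝ | p.2 ≤ 0 ∧ p.1 ^ 2 - b * p.2 ^ 2 = x₀ ^ 2}) ∧
      (∀ γ : ℝ → ℝ × ℝ,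
        IsCrossingPeriodicOrbit
          (fun p : ℝ × ℝ => (a * p.2, p.1)) (fun p : ℝ × ℝ => (b * p.2, p.1)) γ →
        ∃ x₀ > (0 : ℝ), Set.range γ =
          {p : ℝ × ℝ | 0 ≤ p.2 ∧ p.1 ^ 2 - a * p.2 ^ 2 = x₀ ^ 2} ∪
          {p : ℝ × ℝ | p.2 ≤ 0 ∧ p.1 ^ 2 - b * p.2 ^ 2 = x₀ ^ 2})) ∧
    ¬ ∃ γ : ℝ → ℝ × ℝ,
      IsCrossingPeriodicOrbit
        (fun p : ℝ × ℝ => (a * p.2, p.1)) (fun p : ℝ × ℝ => (b * p.2, p.1)) γ ∧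
      ∃ V : Set (ℝ × ℝ), IsOpen V ∧ Set.range γ ⊆ V ∧
        ∀ γ' : ℝ → ℝ × ℝ,
          IsCrossingPeriodicOrbit
            (fun p : ℝ × ℝ => (a * p.2, p.1)) (fun p : ℝ × ℝ => (b * p.2, p.1)) γ' →
          Set.range γ' ⊆ V → Set.range γ' = Set.range γ := by
  refine ⟨?_, ?_, ?_⟩
  · rintro hpos ⟨γ, hγ⟩
    exact not_isCrossingPeriodicOrbit_of_pos hpos γ hγ
  · rintro ⟨ha, hb⟩
    exact ⟨fun r hr => exists_isCrossingPeriodicOrbit_range_eq ha hb hr,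
      fun γ hγ => hγ.exists_range_eq_gluedConic ha hb⟩
  · rintro ⟨γ, hγ, V, hV, hsub, hisolated⟩
    obtain ⟨δ, hδ, hδV, hne⟩ := hγ.exists_range_ne_of_isOpen
      (fun l _ => oscillatorField_smul l) (fun l _ => oscillatorField_smul l) hV hsub
    exact hne (hisolated δ hδ hδV)
end
end

section
/- Let Z=(X,Y) ∈ Ω₀ be a piecewise smooth vector field. Then for every δ > 0 there exist C¹ vector fields X̃, Ỹ on U with sup_{p∈B}(‖X(p) − X̃(p)‖ + ‖DX(p) − DX̃(p)‖) < δ and sup_{p∈B}(‖Y(p) − Ỹ(p)‖ + ‖DY(p) − DỸ(p)‖) < δ on a fixed closed ball B ⊆ U centered at the origin, such that the piecewise smooth vector field Z̃ = (X̃, Ỹ) has a crossing periodic orbit whose image is contained in the open ball of radius δ around the origin and which is isolated, i.e., its image has a neighborhood containing the image of no other crossing periodic orbit of Z̃ (a crossing limit cycle bifurcating from the origin). -/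
open Set Filter

noncomputable section

/-- Entry (1,1) of the Jacobian matrix of `X` at the origin. -/
noncomputable def jac11 (X : ℝ × ℝ → ℝ × ℝ) : ℝ := (fderiv ℝ X (0, 0) (1, 0)).1
/-- Entry (1,2) of the Jacobian matrix of `X` at the origin. -/
noncomputable def jac12 (X : ℝ × ℝ → ℝ × ℝ) : ℝ := (fderiv ℝ X (0, 0) (0, 1)).1
/-- Entry (2,1) of the Jacobian matrix of `X` at the origin, i.e. `∂ₓX₂(0,0)`. -/
noncomputable def jac21 (X : ℝ × ℝ → ℝ × ℝ) : ℝ := (fderiv ℝ X (0, 0) (1, 0)).2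
/-- Entry (2,2) of the Jacobian matrix of `X` at the origin. -/
noncomputable def jac22 (X : ℝ × ℝ → ℝ × ℝ) : ℝ := (fderiv ℝ X (0, 0) (0, 1)).2

/-- Determinant of the Jacobian matrix of `X` at the origin. -/
noncomputable def detJ (X : ℝ × ℝ → ℝ × ℝ) : ℝ := jac11 X * jac22 X - jac12 X * jac21 X
/-- Trace of the Jacobian matrix of `X` at the origin. -/
noncomputable def trJ (X : ℝ × ℝ → ℝ × ℝ) : ℝ := jac11 X + jac22 X

/-- The first (complex) eigenvalue of the Jacobian matrix of `X` at the origin. -/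
noncomputable def eig1 (X : ℝ × ℝ → ℝ × ℝ) : ℂ :=
  if 0 ≤ trJ X ^ 2 - 4 * detJ X then
    (((trJ X + Real.sqrt (trJ X ^ 2 - 4 * detJ X)) / 2 : ℝ) : ℂ)
  else
    (((trJ X / 2 : ℝ) : ℂ) + (Real.sqrt (4 * detJ X - trJ X ^ 2) / 2 : ℝ) * Complex.I)

/-- The second (complex) eigenvalue of the Jacobian matrix of `X` at the origin. -/
noncomputable def eig2 (X : ℝ × ℝ → ℝ × ℝ) : ℂ :=
  if 0 ≤ trJ X ^ 2 - 4 * detJ X then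
    (((trJ X - Real.sqrt (trJ X ^ 2 - 4 * detJ X)) / 2 : ℝ) : ℂ)
  else
    (((trJ X / 2 : ℝ) : ℂ) - (Real.sqrt (4 * detJ X - trJ X ^ 2) / 2 : ℝ) * Complex.I)

/-- The quantity ℓ : `Re λ₁⁺/|Im λ₁⁺| + Re λ₁⁻/|Im λ₁⁻|` when both imaginary parts are
nonzero, and `1` otherwise. -/
noncomputable def ellVal (X Y : ℝ × ℝ → ℝ × ℝ) : ℝ :=
  if (eig1 X).im * (eig1 Y).im ≠ 0 then
    (eig1 X).re / |(eig1 X).im| + (eig1 Y).re / |(eig1 Y).im|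
  else 1

/-- Membership in Ω₀ : `Z = (X, Y)` is a piecewise `C¹` vector field on the open set `U`
containing the origin, the origin is a zero of both `X` and `Y`, it is non-degenerate for
both, and `∂ₓX₂(0,0) ⬝ ∂ₓY₂(0,0) > 0`. -/
def InOmega0 (U : Set (ℝ × ℝ)) (X Y : ℝ × ℝ → ℝ × ℝ) : Prop :=
  IsOpen U ∧ (0, 0) ∈ U ∧ ContDiffOn ℝ 1 X U ∧ ContDiffOn ℝ 1 Y U ∧
    X (0, 0) = (0, 0) ∧ Y (0, 0) = (0, 0) ∧ detJ X * detJ Y ≠ 0 ∧ jac21 X * jac21 Y > 0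

/-- Membership in Ω₁ : member of Ω₀ with distinct eigenvalues of each Jacobian matrix
and `ℓ ≠ 0`. -/
def InOmega1 (U : Set (ℝ × ℝ)) (X Y : ℝ × ℝ → ℝ × ℝ) : Prop :=
  InOmega0 U X Y ∧ eig1 X ≠ eig2 X ∧ eig1 Y ≠ eig2 Y ∧ ellVal X Y ≠ 0

/-- `γ` is a solution of `ẋ = X(x)` on the time set `I`. -/
def IsSolutionOn (X : ℝ × ℝ → ℝ × ℝ) (γ : ℝ → ℝ × ℝ) (I : Set ℝ) : Prop :=
  ∀ t ∈ I, HasDerivAt γ (X (γ t)) t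

/-- `H` maps orbit arcs of `X` lying in `S` onto orbit arcs of `X'` lying in `S'`,
preserving the direction of time (via an increasing homeomorphism of time intervals). -/
def MapsOrbits (X X' : ℝ × ℝ → ℝ × ℝ) (H : ℝ × ℝ → ℝ × ℝ) (S S' : Set (ℝ × ℝ)) : Prop :=
  ∀ (γ : ℝ → ℝ × ℝ) (I : Set ℝ), I.OrdConnected → IsSolutionOn X γ I →
    (∀ t ∈ I, γ t ∈ S) →
    ∃ (δ : ℝ → ℝ × ℝ) (J : Set ℝ) (τ : ℝ → ℝ),
      J.OrdConnected ∧ IsSolutionOn X' δ J ∧ (∀ s ∈ J, δ s ∈ S') ∧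
      Set.BijOn τ I J ∧ StrictMonoOn τ I ∧ ContinuousOn τ I ∧
      ∀ t ∈ I, H (γ t) = δ (τ t)

/-- Local Σ-equivalence near the origin between the piecewise smooth vector fields
`Z = (X, Y)` and `Z' = (X', Y')`: a homeomorphism `H` between neighborhoods of the origin
fixing the origin, preserving the switching line `{y = 0}`, and mapping orbit arcs of `X`
(resp. `Y`) in `{y ≥ 0}` (resp. `{y ≤ 0}`) onto orbit arcs of `X'` (resp. `Y'`),
preserving the direction of time, and conversely. -/
def LocalSigmaEquiv (X Y X' Y' : ℝ × ℝ → ℝ × ℝ) : Prop :=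
  ∃ (U₀ V₀ : Set (ℝ × ℝ)) (H Hinv : ℝ × ℝ → ℝ × ℝ),
    U₀ ∈ nhds ((0, 0) : ℝ × ℝ) ∧ V₀ ∈ nhds ((0, 0) : ℝ × ℝ) ∧
    ContinuousOn H U₀ ∧ ContinuousOn Hinv V₀ ∧
    Set.BijOn H U₀ V₀ ∧
    (∀ p ∈ U₀, Hinv (H p) = p) ∧ (∀ q ∈ V₀, H (Hinv q) = q) ∧
    H (0, 0) = (0, 0) ∧
    H '' (U₀ ∩ {p : ℝ × ℝ | p.2 = 0}) = V₀ ∩ {p : ℝ × ℝ | p.2 = 0} ∧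
    MapsOrbits X X' H (U₀ ∩ {p : ℝ × ℝ | 0 ≤ p.2}) (V₀ ∩ {p : ℝ × ℝ | 0 ≤ p.2}) ∧
    MapsOrbits Y Y' H (U₀ ∩ {p : ℝ × ℝ | p.2 ≤ 0}) (V₀ ∩ {p : ℝ × ℝ | p.2 ≤ 0}) ∧
    MapsOrbits X' X Hinv (V₀ ∩ {p : ℝ × ℝ | 0 ≤ p.2}) (U₀ ∩ {p : ℝ × ℝ | 0 ≤ p.2}) ∧
    MapsOrbits Y' Y Hinv (V₀ ∩ {p : ℝ × ℝ | p.2 ≤ 0}) (U₀ ∩ {p : ℝ × ℝ | p.2 ≤ 0})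

/-!
The perturbation is only required to be `C¹`-close, so near the origin `X` and `Y` may be replaced
by rescalings `p ↦ c • F (c⁻¹ • p)` and `p ↦ c • G (c⁻¹ • p)` of fields `F` and `G` whose
derivatives near the origin are close to those of `X` and `Y` there: a rescaling has the same
derivatives, and its difference with `X` on a ball of radius `ρ` is, up to a small constant, at most
`ε ρ`, which pays for the derivative `O(ρ⁻¹)` of a cutoff. An isolated crossing periodic orbit of
`(F, G)` thus yields arbitrarily small ones.

The fields `F` and `G` are built around two arcs `y = κ e^{-νx} (a² - x²)` and
`y = κ' e^{-ν'x} (a² - x²)` with `κ > 0 > κ'`, which form a closed curve with defining function `V`.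
Prescribing the horizontal velocity of each field and demanding `V' = V` along the flow determines
the vertical one. As `V` grows exponentially, it vanishes along every crossing periodic orbit, so
that any such orbit runs on the closed curve, in one direction, and therefore covers it; conversely
the closed curve, traversed at a suitable speed, is an orbit. With horizontal velocity `σ` at the
origin, the derivative of `F` there has `∂ₓF₂ ≈ -2κσ`, and likewise for `G`. The orbit crosses when
the two horizontal velocities at the origin have opposite signs, and `κ` and `κ'` then also have
opposite signs because `∂ₓX₂` and `∂ₓY₂` have the same one.
-/

open scoped Topology Pointwise

theorem eq_zero_of_periodic_of_hasDerivWithinAt_smul {E : Type*} [NormedAddCommGroup E]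
    [NormedSpace ℝ E] {f : ℝ → E} {k T : ℝ} (hk : k ≠ 0) (hT : 0 < T)
    (hper : Function.Periodic f T) (hf : Continuous f)
    (hderiv : ∀ t, HasDerivWithinAt f (k • f t) (Ici t) t) (t : ℝ) : f t = 0 := by
  have hconst := constant_of_has_deriv_right_zero (a := t) (b := t + T)
    (f := fun s => Real.exp (-(k * s)) • f s) (by fun_prop) (fun s _ => by
      have hexp : HasDerivAt (fun s => Real.exp (-(k * s))) (Real.exp (-(k * s)) * -k) s := by
        simpa using ((hasDerivAt_id s).const_mul k).neg.exp
      refine (hexp.hasDerivWithinAt.smul (hderiv s)).congr_deriv ?_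
      rw [smul_smul, ← add_smul, mul_neg, add_neg_cancel, zero_smul])
    (t + T) ⟨by linarith, le_rfl⟩
  rw [hper t] at hconst
  by_contra hne
  have hexp := Real.exp_injective (smul_left_injective ℝ hne hconst)
  have : k * T = 0 := by linarith
  exact (mul_ne_zero hk hT.ne') this

theorem eventually_nhdsGT_lt_of_hasDerivWithinAt_pos {f : ℝ → ℝ} {f' t : ℝ}
    (hf : HasDerivWithinAt f f' (Ici t) t) (hf' : 0 < f') : ∀ᶠ s in 𝓝[>] t, f t < f s := by
  have hslope := (hasDerivWithinAt_iff_tendsto_slope' self_notMem_Ioi).1 hf.Ioi_of_Ici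
  filter_upwards [hslope.eventually_const_lt hf', self_mem_nhdsWithin] with s hpos hs
  exact (slope_pos_iff_of_le (le_of_lt hs)).1 hpos

theorem hasDerivWithinAt_Ici_of_eventually_hasDerivAt {E : Type*} [NormedAddCommGroup E]
    [NormedSpace ℝ E] {γ g : ℝ → E} {t : ℝ} (hγ : ContinuousAt γ t) (hg : ContinuousAt g t)
    (hderiv : ∀ᶠ s in 𝓝[>] t, HasDerivAt γ (g s) s) : HasDerivWithinAt γ (g t) (Ici t) t :=
  hasDerivWithinAt_Ici_of_tendsto_deriv (s := {s | HasDerivAt γ (g s) s})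
    (fun _ hs => hs.differentiableAt.differentiableWithinAt) hγ.continuousWithinAt hderiv
    (hg.continuousWithinAt.congr' (hderiv.mono fun _ hs => hs.deriv.symm))

theorem eventually_nhdsGT_pos_or_neg {f : ℝ → ℝ} (hf : Continuous f) {t : ℝ}
    (hne : ∀ᶠ s in 𝓝[>] t, f s ≠ 0) :
    (∀ᶠ s in 𝓝[>] t, 0 < f s) ∨ ∀ᶠ s in 𝓝[>] t, f s < 0 := by
  obtain ⟨b, hb, hIoo⟩ := mem_nhdsGT_iff_exists_Ioo_subset.1 hne
  have hmem : Ioo t b ∈ 𝓝[>] t := Ioo_mem_nhdsGT hb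
  exact (isPreconnected_Ioo.mapsTo_Ioi_or_Iio hf.continuousOn hIoo).imp
    (fun h => mem_of_superset hmem h) fun h => mem_of_superset hmem h

theorem exists_forall_le_of_periodic {X : Type*} [TopologicalSpace X] {γ : ℝ → X} {T : ℝ}
    (hT : T ≠ 0) (hper : Function.Periodic γ T) (hγ : Continuous γ) {S : Set X}
    (hS : IsClosed S) {g : X → ℝ} (hg : Continuous g) (hne : ∃ t, γ t ∈ S) :
    ∃ t, γ t ∈ S ∧ ∀ s, γ s ∈ S → g (γ t) ≤ g (γ s) := by
  obtain ⟨t₀, ht₀⟩ := hne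
  have hcompact := (hper.compact_of_continuous hT hγ).inter_right hS
  obtain ⟨_, ⟨⟨t, rfl⟩, ht⟩, hmin⟩ :=
    hcompact.exists_isMinOn ⟨γ t₀, mem_range_self t₀, ht₀⟩ hg.continuousOn
  exact ⟨t, ht, fun s hs => hmin ⟨mem_range_self s, hs⟩⟩

/-- A plane curve turns counterclockwise about the switching line if at every time it moves off
either to the left inside the upper half plane or to the right inside the lower half plane. -/
def TurnsCounterclockwise (γ : ℝ → ℝ × ℝ) : Prop :=
  ∀ t, (∀ᶠ s in 𝓝[>] t, 0 < (γ s).2 ∧ (γ s).1 < (γ t).1) ∨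
    ∀ᶠ s in 𝓝[>] t, (γ s).2 < 0 ∧ (γ t).1 < (γ s).1

namespace TurnsCounterclockwise

variable {γ : ℝ → ℝ × ℝ} {T l r : ℝ}

theorem neg (h : TurnsCounterclockwise γ) : TurnsCounterclockwise (-γ) := fun t => by
  simpa [and_comm] using (h t).symm

theorem exists_snd_nonpos (h : TurnsCounterclockwise γ) (hT : T ≠ 0)
    (hper : Function.Periodic γ T) (hγ : Continuous γ) : ∃ t, (γ t).2 ≤ 0 := by
  by_contra! hpos
  obtain ⟨t, -, hmin⟩ := exists_forall_le_of_periodic hT hper hγ isClosed_univ continuous_fst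
    ⟨0, mem_univ _⟩
  rcases h t with hup | hdown
  · obtain ⟨s, -, hs⟩ := hup.exists
    exact (hmin s (mem_univ _)).not_gt hs
  · obtain ⟨s, hs, -⟩ := hdown.exists
    exact (hpos s).not_gt hs

theorem exists_eq_right (h : TurnsCounterclockwise γ) (hT : T ≠ 0)
    (hper : Function.Periodic γ T) (hγ : Continuous γ) (hle : ∀ t, l ≤ (γ t).1)
    (hzero : ∀ t, (γ t).2 = 0 → (γ t).1 = l ∨ (γ t).1 = r) :
    ∃ t, (γ t).2 = 0 ∧ (γ t).1 = r := by
  obtain ⟨t, ht, hmax⟩ := exists_forall_le_of_periodic (g := fun p : ℝ × ℝ => -p.1) hT hper hγ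
    (isClosed_le continuous_snd continuous_const) (by fun_prop) (h.exists_snd_nonpos hT hper hγ)
  have hup : ∀ᶠ s in 𝓝[>] t, 0 < (γ s).2 ∧ (γ s).1 < (γ t).1 := by
    refine (h t).resolve_right fun hdown => ?_
    obtain ⟨s, hs, hlt⟩ := hdown.exists
    linarith [hmax s hs.le]
  have ht0 : (γ t).2 = 0 := le_antisymm ht <|
    ge_of_tendsto hγ.snd.continuousAt.continuousWithinAt (hup.mono fun s hs => hs.1.le)
  refine ⟨t, ht0, (hzero t ht0).resolve_left fun hl => ?_⟩
  obtain ⟨s, -, hs⟩ := hup.exists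
  linarith [hle s]

theorem exists_fst_eq_of_nonneg (h : TurnsCounterclockwise γ) (hT : T ≠ 0)
    (hper : Function.Periodic γ T) (hγ : Continuous γ) (hIcc : ∀ t, (γ t).1 ∈ Icc l r)
    (hzero : ∀ t, (γ t).2 = 0 → (γ t).1 = l ∨ (γ t).1 = r) {x : ℝ} (hx : x ∈ Icc l r) :
    ∃ t, 0 ≤ (γ t).2 ∧ (γ t).1 = x := by
  obtain ⟨t₀, ht₀, hr⟩ := h.exists_eq_right hT hper hγ (fun t => (hIcc t).1) hzero
  obtain ⟨t, ⟨ht, hxt⟩, hmin⟩ := exists_forall_le_of_periodic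
    (S := {p : ℝ × ℝ | 0 ≤ p.2} ∩ {p | x ≤ p.1}) hT hper hγ
    ((isClosed_le continuous_const continuous_snd).inter
      (isClosed_le continuous_const continuous_fst))
    continuous_fst ⟨t₀, ht₀.ge, hx.2.trans hr.ge⟩
  refine ⟨t, ht, hxt.antisymm' (not_lt.1 fun hlt => ?_)⟩
  rcases h t with hup | hdown
  · have hnear : ∀ᶠ s in 𝓝[>] t, x < (γ s).1 :=
      hγ.fst.continuousAt.continuousWithinAt.eventually_const_lt hlt
    obtain ⟨s, ⟨hpos, hs⟩, hxs⟩ := (hup.and hnear).exists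
    exact (hmin s ⟨hpos.le, hxs.le⟩).not_gt hs
  · have ht0 : (γ t).2 = 0 := le_antisymm
      (le_of_tendsto hγ.snd.continuousAt.continuousWithinAt (hdown.mono fun s hs => hs.1.le)) ht
    obtain ⟨s, -, hs⟩ := hdown.exists
    rcases hzero t ht0 with hl | hr
    · linarith [hx.1]
    · linarith [(hIcc s).2]

theorem exists_fst_eq_of_nonpos (h : TurnsCounterclockwise γ) (hT : T ≠ 0)
    (hper : Function.Periodic γ T) (hγ : Continuous γ) (hIcc : ∀ t, (γ t).1 ∈ Icc l r)
    (hzero : ∀ t, (γ t).2 = 0 → (γ t).1 = l ∨ (γ t).1 = r) {x : ℝ} (hx : x ∈ Icc l r) :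
    ∃ t, (γ t).2 ≤ 0 ∧ (γ t).1 = x := by
  obtain ⟨t, ht, htx⟩ := h.neg.exists_fst_eq_of_nonneg hT (hper.comp Neg.neg) hγ.neg
    (l := -r) (r := -l) (fun t => ⟨neg_le_neg (hIcc t).2, neg_le_neg (hIcc t).1⟩)
    (fun t ht => by simpa [or_comm] using hzero t (neg_eq_zero.1 ht))
    ⟨neg_le_neg hx.2, neg_le_neg hx.1⟩
  exact ⟨t, neg_nonneg.1 ht, neg_injective htx⟩

end TurnsCounterclockwise

theorem exists_orderIso_hasDerivAt_of_periodic_s19 {ψ : ℝ → ℝ} {p : ℝ} (hp : 0 < p)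
    (hψ : Continuous ψ) (hper : Function.Periodic ψ p)
    (hpos : ∀ θ, ∀ᶠ x in 𝓝[≠] θ, 0 < ψ x) :
    ∃ e : ℝ ≃o ℝ, (∀ θ, HasDerivAt e (ψ θ) θ) ∧ ∃ T > 0, ∀ θ, e (θ + p) = e θ + T := by
  have hnonneg : ∀ θ, 0 ≤ ψ θ := fun θ =>
    ge_of_tendsto hψ.continuousAt.continuousWithinAt ((hpos θ).mono fun _ hx => hx.le)
  have hint : ∀ a b, IntervalIntegrable ψ MeasureTheory.volume a b := hψ.intervalIntegrable
  have hderiv : ∀ θ, HasDerivAt (fun u => ∫ x in (0 : ℝ)..u, ψ x) (ψ θ) θ := fun θ =>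
    (hψ.integral_hasStrictDerivAt 0 θ).hasDerivAt
  have hintegral : ∀ {a b}, a < b → 0 < ∫ x in a..b, ψ x := fun {a b} hab => by
    obtain ⟨x, hx, hxab⟩ := (((hpos a).filter_mono (nhdsGT_le_nhdsNE a)).and
      (Ioo_mem_nhdsGT hab)).exists
    exact intervalIntegral.integral_pos hab hψ.continuousOn (fun y _ => hnonneg y)
      ⟨x, Ioo_subset_Icc_self hxab, hx⟩
  have hmono : StrictMono fun u => ∫ x in (0 : ℝ)..u, ψ x := fun a b hab =>
    sub_pos.1 <| (hintegral hab).trans_eq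
      (intervalIntegral.integral_interval_sub_left (hint _ _) (hint _ _)).symm
  have hsurj : Function.Surjective fun u => ∫ x in (0 : ℝ)..u, ψ x :=
    Continuous.surjective (continuous_iff_continuousAt.2 fun θ => (hderiv θ).continuousAt)
      (hper.tendsto_atTop_intervalIntegral_of_pos (hintegral hp) hp)
      (hper.tendsto_atBot_intervalIntegral_of_pos (hintegral hp) hp)
  refine ⟨hmono.orderIsoOfSurjective _ hsurj, hderiv, _, hintegral hp, fun θ => ?_⟩
  have := hper.intervalIntegral_add_eq_add 0 θ hint
  simpa using this

namespace IsCrossingPeriodicOrbit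

variable {X Y : ℝ × ℝ → ℝ × ℝ}

theorem hasDerivWithinAt_Ici {γ : ℝ → ℝ × ℝ} {B : Set (ℝ × ℝ)}
    (h : IsCrossingPeriodicOrbit X Y γ) (hX : ContinuousOn X B) (hY : ContinuousOn Y B)
    (hB : range γ ⊆ B) (t : ℝ) :
    ((∀ᶠ s in 𝓝[>] t, 0 < (γ s).2) ∧ HasDerivWithinAt γ (X (γ t)) (Ici t) t) ∨
      (∀ᶠ s in 𝓝[>] t, (γ s).2 < 0) ∧ HasDerivWithinAt γ (Y (γ t)) (Ici t) t := by
  obtain ⟨hγ, -, -, hup, hdown, hdiscrete, -⟩ := h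
  have hmem : ∀ s, γ s ∈ B := fun s => hB (mem_range_self s)
  have hne : ∀ᶠ s in 𝓝[>] t, (γ s).2 ≠ 0 := by
    by_cases ht : (γ t).2 = 0
    · obtain ⟨ε, hε, hs⟩ := hdiscrete t ht
      filter_upwards [Ioo_mem_nhdsGT (show t < t + ε by linarith)] with s hst
      exact hs s hst.1.ne' (abs_lt.2 ⟨by linarith [hst.1], by linarith [hst.2]⟩)
    · exact (hγ.snd.continuousAt.eventually_ne ht).filter_mono nhdsWithin_le_nhds
  exact (eventually_nhdsGT_pos_or_neg hγ.snd hne).imp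
    (fun hpos => ⟨hpos, hasDerivWithinAt_Ici_of_eventually_hasDerivAt hγ.continuousAt
      (hX.comp_continuous hγ hmem).continuousAt (hpos.mono hup)⟩)
    fun hneg => ⟨hneg, hasDerivWithinAt_Ici_of_eventually_hasDerivAt hγ.continuousAt
      (hY.comp_continuous hγ hmem).continuousAt (hneg.mono hdown)⟩

theorem exists_of_timeChange {C : ℝ → ℝ × ℝ} {ψ : ℝ → ℝ} {p : ℝ} (hp : 0 < p)
    (hC : Continuous C) (hCper : Function.Periodic C p) (hCne : ∃ θ₁ θ₂, C θ₁ ≠ C θ₂)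
    (hψ : Continuous ψ) (hψper : Function.Periodic ψ p)
    (hpos : ∀ θ, (C θ).2 ≠ 0 → 0 < ψ θ)
    (hX : ∀ θ, 0 < (C θ).2 → HasDerivAt C (ψ θ • X (C θ)) θ)
    (hY : ∀ θ, (C θ).2 < 0 → HasDerivAt C (ψ θ • Y (C θ)) θ)
    (hdiscrete : ∀ θ, (C θ).2 = 0 → ∀ᶠ x in 𝓝[≠] θ, (C x).2 ≠ 0)
    (hcross : ∀ θ, (C θ).2 = 0 → 0 < (X (C θ)).2 * (Y (C θ)).2) :
    ∃ γ, IsCrossingPeriodicOrbit X Y γ ∧ range γ = range C := by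
  have hev : ∀ θ, ∀ᶠ x in 𝓝[≠] θ, (C x).2 ≠ 0 := fun θ => by
    by_cases hθ : (C θ).2 = 0
    · exact hdiscrete θ hθ
    · exact (hC.snd.continuousAt.eventually_ne hθ).filter_mono nhdsWithin_le_nhds
  obtain ⟨e, he, T, hT, heT⟩ := exists_orderIso_hasDerivAt_of_periodic_s19 hp hψ hψper
    fun θ => (hev θ).mono hpos
  have hsymm : Continuous e.symm := e.symm.continuous
  have hderiv : ∀ {F : ℝ × ℝ → ℝ × ℝ} {t : ℝ}, (C (e.symm t)).2 ≠ 0 →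
      HasDerivAt C (ψ (e.symm t) • F (C (e.symm t))) (e.symm t) →
      HasDerivAt (C ∘ e.symm) (F (C (e.symm t))) t := fun {F t} hne hF => by
    have hψt := (hpos _ hne).ne'
    have hinv : HasDerivAt e.symm (ψ (e.symm t))⁻¹ t :=
      (he _).of_local_left_inverse hsymm.continuousAt hψt (.of_forall e.apply_symm_apply)
    simpa [smul_smul, hψt] using hF.scomp t hinv
  refine ⟨C ∘ e.symm, ⟨hC.comp hsymm, ⟨T, hT, fun t => ?_⟩, ?_, fun t ht => hderiv ht.ne' (hX _ ht),
    fun t ht => hderiv ht.ne (hY _ ht), fun t _ => ?_, fun t ht => hcross _ ht⟩,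
    e.symm.surjective.range_comp C⟩
  · have : e.symm (t + T) = e.symm t + p := by rw [e.symm_apply_eq, heT, e.apply_symm_apply]
    simp only [Function.comp_apply, this, hCper _]
  · obtain ⟨θ₁, θ₂, hne⟩ := hCne
    exact ⟨e θ₁, e θ₂, by simpa using hne⟩
  · have hnear := hsymm.continuousAt.eventually (eventually_nhdsWithin_iff.1 (hev (e.symm t)))
    obtain ⟨ε, hε, hball⟩ := Metric.eventually_nhds_iff.1 hnear
    exact ⟨ε, hε, fun s hs hst => hball (by rwa [Real.dist_eq]) (by simpa using hs)⟩

end IsCrossingPeriodicOrbit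

/-- The height over `x` of the arc `y = κ e^{-νx} (a² - x²)` joining `(-|a|, 0)` to `(|a|, 0)`; the
arc lies on the side of the switching line given by the sign of `κ`. -/
def arcHeight (ν κ a x : ℝ) : ℝ := κ * Real.exp (-(ν * x)) * (a ^ 2 - x ^ 2)

/-- The defining function of the arc `y = arcHeight ν κ a x`, normalised so as to satisfy `V' = V`
along the fields of `IsArcField`. -/
def arcDefect (ν κ a : ℝ) (p : ℝ × ℝ) : ℝ := p.2 * Real.exp (ν * p.1) / κ - (a ^ 2 - p.1 ^ 2)

/-- The vertical velocity at `p` which, combined with the horizontal velocity `v`, makes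
`V = arcDefect ν κ a` grow at the rate `V' = V`. -/
def arcVelocity (ν κ a v : ℝ) (p : ℝ × ℝ) : ℝ :=
  (1 - ν * v) * p.2 - κ * Real.exp (-(ν * p.1)) * (a ^ 2 - p.1 ^ 2 + 2 * p.1 * v)

section Arc

variable {ν κ a : ℝ}

theorem arcDefect_eq_zero_iff (hκ : κ ≠ 0) (p : ℝ × ℝ) :
    arcDefect ν κ a p = 0 ↔ p.2 = arcHeight ν κ a p.1 := by
  rw [arcDefect, arcHeight, Real.exp_neg, sub_eq_zero, div_eq_iff hκ]
  field_simp

theorem continuous_arcDefect : Continuous (arcDefect ν κ a) := by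
  unfold arcDefect
  fun_prop

theorem hasDerivWithinAt_arcDefect {γ : ℝ → ℝ × ℝ} {v : ℝ × ℝ} {s : Set ℝ} {t : ℝ} (hκ : κ ≠ 0)
    (hγ : HasDerivWithinAt γ v s t) (hv : v.2 = arcVelocity ν κ a v.1 (γ t)) :
    HasDerivWithinAt (fun τ => arcDefect ν κ a (γ τ)) (arcDefect ν κ a (γ t)) s t := by
  have hx : HasDerivWithinAt (fun τ => (γ τ).1) v.1 s t := hγ.fst
  have hy : HasDerivWithinAt (fun τ => (γ τ).2) v.2 s t := hγ.snd
  refine (((hy.mul (hx.const_mul ν).exp).div_const κ).sub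
    ((hx.pow 2).const_sub (a ^ 2))).congr_deriv ?_
  rw [hv, arcVelocity, arcDefect, Real.exp_neg]
  field_simp
  ring

theorem continuous_arcHeight : Continuous (arcHeight ν κ a) := by
  unfold arcHeight
  fun_prop

theorem hasDerivAt_arcHeight (x : ℝ) : HasDerivAt (arcHeight ν κ a)
    (-(κ * Real.exp (-(ν * x)) * (ν * (a ^ 2 - x ^ 2) + 2 * x))) x := by
  have hexp : HasDerivAt (fun x => Real.exp (-(ν * x))) (Real.exp (-(ν * x)) * -ν) x := by
    simpa using ((hasDerivAt_id x).const_mul ν).neg.exp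
  refine ((hexp.const_mul κ).mul ((hasDerivAt_pow 2 x).const_sub (a ^ 2))).congr_deriv ?_
  simp
  ring

theorem arcVelocity_arcHeight (v x : ℝ) :
    arcVelocity ν κ a v (x, arcHeight ν κ a x) =
      v * -(κ * Real.exp (-(ν * x)) * (ν * (a ^ 2 - x ^ 2) + 2 * x)) := by
  rw [arcVelocity, arcHeight]
  ring

theorem mul_arcHeight_nonneg_iff (hκ : κ ≠ 0) {x : ℝ} :
    0 ≤ κ * arcHeight ν κ a x ↔ |x| ≤ |a| := by
  have hfactor : κ * arcHeight ν κ a x = κ ^ 2 * Real.exp (-(ν * x)) * (a ^ 2 - x ^ 2) := by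
    rw [arcHeight]
    ring
  rw [hfactor, mul_nonneg_iff_of_pos_left (by positivity), sub_nonneg, sq_le_sq]

theorem arcHeight_eq_zero_iff (hκ : κ ≠ 0) {x : ℝ} : arcHeight ν κ a x = 0 ↔ |x| = |a| := by
  simp [arcHeight, hκ, sub_eq_zero, sq_eq_sq_iff_abs_eq_abs, eq_comm (a := |x|)]

theorem abs_arcHeight_le {x : ℝ} (hx : |x| ≤ |a|) :
    |arcHeight ν κ a x| ≤ |κ| * Real.exp (|ν| * |a|) * a ^ 2 := by
  have hexp : -(ν * x) ≤ |ν| * |a| :=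
    (neg_le_abs _).trans ((abs_mul ν x).trans_le (mul_le_mul_of_nonneg_left hx (abs_nonneg ν)))
  have hsq : |a ^ 2 - x ^ 2| ≤ a ^ 2 := by
    rw [abs_of_nonneg (sub_nonneg.2 (sq_le_sq.2 hx))]
    linarith [sq_nonneg x]
  rw [arcHeight, abs_mul, abs_mul, Real.abs_exp]
  gcongr

end Arc

/-- On `B`, the field `X` is continuous, makes `V = arcDefect ν κ a` grow at the rate `V' = V`, and
moves horizontally in the direction of `-κa`; so the sign of `a` encodes the sense of rotation. -/
structure IsArcField (ν κ a : ℝ) (B : Set (ℝ × ℝ)) (X : ℝ × ℝ → ℝ × ℝ) : Prop where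
  continuousOn : ContinuousOn X B
  snd_eq : ∀ p ∈ B, (X p).2 = arcVelocity ν κ a (X p).1 p
  mul_fst_neg : ∀ p ∈ B, κ * a * (X p).1 < 0

namespace IsArcField

variable {ν κ a : ℝ} {B : Set (ℝ × ℝ)} {X : ℝ × ℝ → ℝ × ℝ}

theorem fst_ne_zero (h : IsArcField ν κ a B X) {p : ℝ × ℝ} (hp : p ∈ B) : (X p).1 ≠ 0 :=
  right_ne_zero_of_mul (h.mul_fst_neg p hp).ne

theorem radius_ne_zero (h : IsArcField ν κ a B X) {p : ℝ × ℝ} (hp : p ∈ B) : a ≠ 0 :=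
  right_ne_zero_of_mul (left_ne_zero_of_mul (h.mul_fst_neg p hp).ne)

theorem coeff_ne_zero (h : IsArcField ν κ a B X) {p : ℝ × ℝ} (hp : p ∈ B) : κ ≠ 0 :=
  left_ne_zero_of_mul (left_ne_zero_of_mul (h.mul_fst_neg p hp).ne)

theorem mul_fst_div_neg (h : IsArcField ν κ a B X) {p : ℝ × ℝ} (hp : p ∈ B) :
    κ * ((X p).1 / a) < 0 := by
  have ha := h.radius_ne_zero hp
  rw [show κ * ((X p).1 / a) = κ * a * (X p).1 / a ^ 2 by field_simp]
  exact div_neg_of_neg_of_pos (h.mul_fst_neg p hp) (by positivity)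

theorem snd_eq_of_abs_eq (h : IsArcField ν κ a B X) {p : ℝ × ℝ} (hp : p ∈ B) (hy : p.2 = 0)
    (hx : |p.1| = |a|) : (X p).2 = -2 * κ * Real.exp (-(ν * p.1)) * p.1 * (X p).1 := by
  rw [h.snd_eq p hp, arcVelocity, hy, (sq_eq_sq_iff_abs_eq_abs _ _).2 hx]
  ring

theorem crossing {ν' κ' : ℝ} {Y : ℝ × ℝ → ℝ × ℝ} (hX : IsArcField ν κ a B X)
    (hY : IsArcField ν' κ' a B Y) {p : ℝ × ℝ} (hp : p ∈ B) (hy : p.2 = 0) (hx : |p.1| = |a|) :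
    0 < (X p).2 * (Y p).2 := by
  have hfactor : (X p).2 * (Y p).2 = 4 * Real.exp (-(ν * p.1)) * Real.exp (-(ν' * p.1)) *
      ((κ * a * (X p).1) * (κ' * a * (Y p).1)) := by
    rw [hX.snd_eq_of_abs_eq hp hy hx, hY.snd_eq_of_abs_eq hp hy hx]
    have := (sq_eq_sq_iff_abs_eq_abs _ _).2 hx
    linear_combination (4 * κ * κ' * Real.exp (-(ν * p.1)) * Real.exp (-(ν' * p.1)) *
      (X p).1 * (Y p).1) * this
  rw [hfactor]
  have := mul_pos_of_neg_of_neg (hX.mul_fst_neg p hp) (hY.mul_fst_neg p hp)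
  positivity

end IsArcField

/-- The region `W` contains exactly one crossing periodic orbit of `(X, Y)`, up to the choice of a
parametrisation; for open `W`, this orbit is a crossing limit cycle. -/
def HasUniqueCrossingOrbitIn (X Y : ℝ × ℝ → ℝ × ℝ) (W : Set (ℝ × ℝ)) : Prop :=
  ∃ γ, IsCrossingPeriodicOrbit X Y γ ∧ range γ ⊆ W ∧
    ∀ γ', IsCrossingPeriodicOrbit X Y γ' → range γ' ⊆ W → range γ' = range γ

/-- The function measuring the deviation from the closed curve formed by an arc in the upper half
plane and an arc in the lower one, with the common end points `(±a, 0)`. -/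
def cycleDefect (ν κ ν' κ' a : ℝ) (p : ℝ × ℝ) : ℝ :=
  if 0 ≤ p.2 then arcDefect ν κ a p else arcDefect ν' κ' a p

section Cycle

variable {ν κ ν' κ' a : ℝ}

theorem cycleDefect_of_nonneg {p : ℝ × ℝ} (hp : 0 ≤ p.2) :
    cycleDefect ν κ ν' κ' a p = arcDefect ν κ a p := if_pos hp

theorem cycleDefect_of_nonpos {p : ℝ × ℝ} (hp : p.2 ≤ 0) :
    cycleDefect ν κ ν' κ' a p = arcDefect ν' κ' a p := by
  rcases hp.lt_or_eq with hneg | hzero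
  · exact if_neg hneg.not_ge
  · simp [cycleDefect, arcDefect, hzero]

theorem continuous_cycleDefect : Continuous (cycleDefect ν κ ν' κ' a) :=
  Continuous.if_le continuous_arcDefect continuous_arcDefect continuous_const continuous_snd
    fun _ hp => (cycleDefect_of_nonneg hp.le).symm.trans (cycleDefect_of_nonpos hp.ge)

/-- The closed curve formed by the arcs `y = arcHeight ν κ a x` in the upper half plane and
`y = arcHeight ν' κ' a x` in the lower one. -/
def arcCycle (ν κ ν' κ' a : ℝ) : Set (ℝ × ℝ) := {p | cycleDefect ν κ ν' κ' a p = 0}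

theorem mem_arcCycle_iff_of_nonneg (hκ : κ ≠ 0) {p : ℝ × ℝ} (hp : 0 ≤ p.2) :
    p ∈ arcCycle ν κ ν' κ' a ↔ p.2 = arcHeight ν κ a p.1 := by
  rw [arcCycle, mem_ofPred_eq, cycleDefect_of_nonneg hp, arcDefect_eq_zero_iff hκ]

theorem mem_arcCycle_iff_of_nonpos (hκ' : κ' ≠ 0) {p : ℝ × ℝ} (hp : p.2 ≤ 0) :
    p ∈ arcCycle ν κ ν' κ' a ↔ p.2 = arcHeight ν' κ' a p.1 := by
  rw [arcCycle, mem_ofPred_eq, cycleDefect_of_nonpos hp, arcDefect_eq_zero_iff hκ']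

theorem abs_fst_le_of_mem_arcCycle (hκ : 0 < κ) (hκ' : κ' < 0) {p : ℝ × ℝ}
    (hp : p ∈ arcCycle ν κ ν' κ' a) : |p.1| ≤ |a| := by
  rcases le_total 0 p.2 with hup | hdown
  · refine (mul_arcHeight_nonneg_iff (ν := ν) hκ.ne').1 (mul_nonneg hκ.le ?_)
    rwa [← (mem_arcCycle_iff_of_nonneg hκ.ne' hup).1 hp]
  · refine (mul_arcHeight_nonneg_iff (ν := ν') hκ'.ne).1 (mul_nonneg_of_nonpos_of_nonpos hκ'.le ?_)
    rwa [← (mem_arcCycle_iff_of_nonpos hκ'.ne hdown).1 hp]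

theorem abs_fst_eq_of_mem_arcCycle (hκ : κ ≠ 0) {p : ℝ × ℝ} (hp : p ∈ arcCycle ν κ ν' κ' a)
    (hy : p.2 = 0) : |p.1| = |a| :=
  (arcHeight_eq_zero_iff hκ).1 (((mem_arcCycle_iff_of_nonneg hκ hy.ge).1 hp).symm.trans hy)

theorem eventually_arcCycle_subset_ball (hκ : 0 < κ) (hκ' : κ' < 0) {s : ℝ} (hs : 0 < s) :
    ∀ᶠ a in 𝓝 0, arcCycle ν κ ν' κ' a ⊆ Metric.ball 0 s := by
  have habs : ∀ᶠ a : ℝ in 𝓝 0, |a| < s :=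
    continuous_abs.continuousAt.eventually_lt_const (by simpa)
  have hheight : ∀ ν κ : ℝ, ∀ᶠ a in 𝓝 0, |κ| * Real.exp (|ν| * |a|) * a ^ 2 < s := fun ν κ => by
    have hcont : Continuous fun a : ℝ => |κ| * Real.exp (|ν| * |a|) * a ^ 2 := by fun_prop
    exact hcont.continuousAt.eventually_lt_const (by simpa)
  filter_upwards [habs, hheight ν κ, hheight ν' κ'] with a ha hup hdown p hp
  have hx := abs_fst_le_of_mem_arcCycle hκ hκ' hp
  have hy : |p.2| < s := by
    rcases le_total 0 p.2 with h | h
    · rw [(mem_arcCycle_iff_of_nonneg hκ.ne' h).1 hp]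
      exact (abs_arcHeight_le hx).trans_lt hup
    · rw [(mem_arcCycle_iff_of_nonpos hκ'.ne h).1 hp]
      exact (abs_arcHeight_le hx).trans_lt hdown
  simpa [Prod.norm_def] using ⟨hx.trans_lt ha, hy⟩

end Cycle

section Uniqueness

variable {ν κ ν' κ' a : ℝ} {B : Set (ℝ × ℝ)} {X Y : ℝ × ℝ → ℝ × ℝ} {γ : ℝ → ℝ × ℝ}

theorem IsArcField.cycleDefect_eq_zero (hX : IsArcField ν κ a B X) (hY : IsArcField ν' κ' a B Y)
    (hγ : IsCrossingPeriodicOrbit X Y γ) (hB : range γ ⊆ B) (t : ℝ) :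
    cycleDefect ν κ ν' κ' a (γ t) = 0 := by
  have hcont := hγ.1
  obtain ⟨T, hT, hper⟩ := hγ.2.1
  refine eq_zero_of_periodic_of_hasDerivWithinAt_smul one_ne_zero hT (hper.comp _)
    (continuous_cycleDefect.comp hcont) (fun t => ?_) t
  have hmem : γ t ∈ B := hB (mem_range_self t)
  rw [one_smul, ← hasDerivWithinAt_Ioi_iff_Ici]
  rcases hγ.hasDerivWithinAt_Ici hX.continuousOn hY.continuousOn hB t with
    ⟨hup, hderiv⟩ | ⟨hdown, hderiv⟩
  · have ht : 0 ≤ (γ t).2 :=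
      ge_of_tendsto hcont.snd.continuousAt.continuousWithinAt (hup.mono fun _ h => h.le)
    rw [Function.comp_apply, cycleDefect_of_nonneg ht]
    exact (hasDerivWithinAt_arcDefect (hX.coeff_ne_zero hmem) hderiv.Ioi_of_Ici
      (hX.snd_eq _ hmem)).congr_of_eventuallyEq (hup.mono fun _ h => cycleDefect_of_nonneg h.le)
      (cycleDefect_of_nonneg ht)
  · have ht : (γ t).2 ≤ 0 :=
      le_of_tendsto hcont.snd.continuousAt.continuousWithinAt (hdown.mono fun _ h => h.le)
    rw [Function.comp_apply, cycleDefect_of_nonpos ht]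
    exact (hasDerivWithinAt_arcDefect (hY.coeff_ne_zero hmem) hderiv.Ioi_of_Ici
      (hY.snd_eq _ hmem)).congr_of_eventuallyEq (hdown.mono fun _ h => cycleDefect_of_nonpos h.le)
      (cycleDefect_of_nonpos ht)

theorem IsArcField.turnsCounterclockwise (hκ : 0 < κ) (hκ' : κ' < 0) (hX : IsArcField ν κ a B X)
    (hY : IsArcField ν' κ' a B Y) (hγ : IsCrossingPeriodicOrbit X Y γ) (hB : range γ ⊆ B) :
    TurnsCounterclockwise fun t => ((γ t).1 / a, (γ t).2) := by
  intro t
  have hmem : γ t ∈ B := hB (mem_range_self t)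
  refine (hγ.hasDerivWithinAt_Ici hX.continuousOn hY.continuousOn hB t).imp ?_ ?_ <;>
    rintro ⟨hsign, hderiv⟩
  · have hleft : 0 < -((X (γ t)).1 / a) := by
      linarith [neg_of_mul_neg_right (hX.mul_fst_div_neg hmem) hκ.le]
    have hx : HasDerivWithinAt (fun s => (γ s).1) (X (γ t)).1 (Ici t) t := hderiv.fst
    filter_upwards [hsign, eventually_nhdsGT_lt_of_hasDerivWithinAt_pos
      (hx.div_const a).neg hleft] with s hs hlt using ⟨hs, neg_lt_neg_iff.1 hlt⟩
  · have hright : 0 < (Y (γ t)).1 / a := pos_of_mul_neg_right (hY.mul_fst_div_neg hmem) hκ'.le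
    have hx : HasDerivWithinAt (fun s => (γ s).1) (Y (γ t)).1 (Ici t) t := hderiv.fst
    filter_upwards [hsign, eventually_nhdsGT_lt_of_hasDerivWithinAt_pos
      (hx.div_const a) hright] with s hs hlt using ⟨hs, hlt⟩

theorem IsArcField.range_eq_arcCycle (hκ : 0 < κ) (hκ' : κ' < 0) (hX : IsArcField ν κ a B X)
    (hY : IsArcField ν' κ' a B Y) (hγ : IsCrossingPeriodicOrbit X Y γ) (hB : range γ ⊆ B) :
    range γ = arcCycle ν κ ν' κ' a := by
  have hmem : ∀ t, γ t ∈ arcCycle ν κ ν' κ' a := hX.cycleDefect_eq_zero hY hγ hB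
  have hturn := hX.turnsCounterclockwise hκ hκ' hY hγ hB
  have hcont := hγ.1
  obtain ⟨T, hT, hper⟩ := hγ.2.1
  have ha : a ≠ 0 := hX.radius_ne_zero (hB (mem_range_self 0))
  have habs : ∀ {p}, p ∈ arcCycle ν κ ν' κ' a → |p.1 / a| ≤ 1 := fun hp => by
    rw [abs_div]
    exact div_le_one_of_le₀ (abs_fst_le_of_mem_arcCycle hκ hκ' hp) (abs_nonneg a)
  have hend : ∀ t, (γ t).2 = 0 → (γ t).1 / a = -1 ∨ (γ t).1 / a = 1 := fun t ht => by
    rw [or_comm, ← abs_eq zero_le_one, abs_div, abs_fst_eq_of_mem_arcCycle hκ.ne' (hmem t) ht,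
      div_self (abs_ne_zero.2 ha)]
  have hper' : Function.Periodic (fun t => ((γ t).1 / a, (γ t).2)) T :=
    hper.comp fun q => (q.1 / a, q.2)
  refine (range_subset_iff.2 hmem).antisymm fun p hp => ?_
  rcases le_total 0 p.2 with hup | hdown
  · obtain ⟨t, ht : 0 ≤ (γ t).2, hx⟩ := hturn.exists_fst_eq_of_nonneg hT.ne' hper' (by fun_prop)
      (fun t => abs_le.1 (habs (hmem t))) hend (abs_le.1 (habs hp))
    have hx : (γ t).1 = p.1 := (div_left_inj' ha).1 hx
    refine ⟨t, Prod.ext hx ?_⟩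
    rw [(mem_arcCycle_iff_of_nonneg hκ.ne' ht).1 (hmem t), hx,
      (mem_arcCycle_iff_of_nonneg hκ.ne' hup).1 hp]
  · obtain ⟨t, ht : (γ t).2 ≤ 0, hx⟩ := hturn.exists_fst_eq_of_nonpos hT.ne' hper' (by fun_prop)
      (fun t => abs_le.1 (habs (hmem t))) hend (abs_le.1 (habs hp))
    have hx : (γ t).1 = p.1 := (div_left_inj' ha).1 hx
    refine ⟨t, Prod.ext hx ?_⟩
    rw [(mem_arcCycle_iff_of_nonpos hκ'.ne ht).1 (hmem t), hx,
      (mem_arcCycle_iff_of_nonpos hκ'.ne hdown).1 hp]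

end Uniqueness

/-- The point over the angle `θ` of the arc `y = arcHeight ν κ a x`, with abscissa `a cos θ`. -/
def arcPoint (ν κ a θ : ℝ) : ℝ × ℝ := (a * Real.cos θ, arcHeight ν κ a (a * Real.cos θ))

/-- The parametrisation of `arcCycle ν κ ν' κ' a` by the angle `θ`, with abscissa `a cos θ`. -/
def cyclePoint (ν κ ν' κ' a θ : ℝ) : ℝ × ℝ :=
  if 0 ≤ Real.sin θ then arcPoint ν κ a θ else arcPoint ν' κ' a θ

section Existence

variable {ν κ ν' κ' a : ℝ} {B : Set (ℝ × ℝ)} {X Y : ℝ × ℝ → ℝ × ℝ}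

theorem continuous_arcPoint : Continuous (arcPoint ν κ a) :=
  (by fun_prop : Continuous fun θ => a * Real.cos θ).prodMk
    (continuous_arcHeight.comp (by fun_prop))

theorem arcPoint_snd (θ : ℝ) : (arcPoint ν κ a θ).2 =
    κ * (Real.exp (-(ν * (a * Real.cos θ))) * (a * Real.sin θ) ^ 2) := by
  rw [arcPoint, arcHeight, mul_pow, mul_pow, Real.sin_sq]
  ring

theorem arcPoint_of_sin_eq_zero {θ : ℝ} (hθ : Real.sin θ = 0) :
    arcPoint ν κ a θ = (a * Real.cos θ, 0) :=
  Prod.ext rfl (by simp [arcPoint_snd, hθ])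

theorem cyclePoint_of_nonpos {θ : ℝ} (hθ : Real.sin θ ≤ 0) :
    cyclePoint ν κ ν' κ' a θ = arcPoint ν' κ' a θ := by
  rcases hθ.lt_or_eq with hneg | hzero
  · exact if_neg hneg.not_ge
  · simp [cyclePoint, arcPoint_of_sin_eq_zero hzero]

theorem IsArcField.hasDerivAt_arcPoint (h : IsArcField ν κ a B X) {θ : ℝ}
    (hB : arcPoint ν κ a θ ∈ B) : HasDerivAt (arcPoint ν κ a)
      ((-(a * Real.sin θ) / (X (arcPoint ν κ a θ)).1) • X (arcPoint ν κ a θ)) θ := by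
  have hx : HasDerivAt (fun θ => a * Real.cos θ) (-(a * Real.sin θ)) θ := by
    simpa using (Real.hasDerivAt_cos θ).const_mul a
  have hne := h.fst_ne_zero hB
  refine (hx.prodMk ((hasDerivAt_arcHeight _).comp θ hx)).congr_deriv (Prod.ext ?_ ?_)
  · exact (div_mul_cancel₀ _ hne).symm
  · rw [Prod.smul_snd, h.snd_eq _ hB, smul_eq_mul]
    conv_rhs => rw [arcPoint, arcVelocity_arcHeight, ← arcPoint]
    field_simp

theorem arcPoint_mem_arcCycle_of_pos (hκ : 0 < κ) (θ : ℝ) :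
    arcPoint ν κ a θ ∈ arcCycle ν κ ν' κ' a := by
  refine (mem_arcCycle_iff_of_nonneg hκ.ne' ?_).2 rfl
  rw [arcPoint_snd]
  positivity

theorem arcPoint_mem_arcCycle_of_neg (hκ' : κ' < 0) (θ : ℝ) :
    arcPoint ν' κ' a θ ∈ arcCycle ν κ ν' κ' a := by
  refine (mem_arcCycle_iff_of_nonpos hκ'.ne ?_).2 rfl
  rw [arcPoint_snd]
  exact mul_nonpos_of_nonpos_of_nonneg hκ'.le (by positivity)

theorem sign_cyclePoint_snd (hκ : 0 < κ) (hκ' : κ' < 0) (ha : a ≠ 0) (θ : ℝ) :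
    SignType.sign (cyclePoint ν κ ν' κ' a θ).2 = SignType.sign (Real.sin θ) := by
  rcases lt_trichotomy (Real.sin θ) 0 with hneg | hzero | hpos
  · rw [cyclePoint_of_nonpos hneg.le, arcPoint_snd, sign_neg hneg]
    exact sign_neg (mul_neg_of_neg_of_pos hκ' (by have := hneg.ne; positivity))
  · rw [cyclePoint_of_nonpos hzero.le, arcPoint_of_sin_eq_zero hzero, hzero]
  · rw [cyclePoint, if_pos hpos.le, arcPoint_snd, sign_pos hpos]
    exact sign_pos (by have := hpos.ne'; positivity)

/-- The rate at which the angle must be traversed for `cyclePoint` to follow `X` and `Y`. -/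
def cycleRate (X Y : ℝ × ℝ → ℝ × ℝ) (ν κ ν' κ' a θ : ℝ) : ℝ :=
  if 0 ≤ Real.sin θ then -(a * Real.sin θ) / (X (arcPoint ν κ a θ)).1
  else -(a * Real.sin θ) / (Y (arcPoint ν' κ' a θ)).1

theorem IsArcField.rate_pos (h : IsArcField ν κ a B X) {p : ℝ × ℝ} (hp : p ∈ B) {s : ℝ}
    (hs : 0 < κ * s) : 0 < -(a * s) / (X p).1 := by
  have hne := h.fst_ne_zero hp
  have hκ : κ ≠ 0 := left_ne_zero_of_mul hs.ne'
  have : -(a * s) / (X p).1 = -(κ * a * (X p).1) * (κ * s) / (κ * (X p).1) ^ 2 := by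
    field_simp
  rw [this]
  have := h.mul_fst_neg p hp
  have : 0 < -(κ * a * (X p).1) := by linarith
  have : 0 < (κ * (X p).1) ^ 2 := by positivity
  positivity

theorem IsArcField.continuous_rate (hX : IsArcField ν κ a B X) (hB : ∀ θ, arcPoint ν κ a θ ∈ B) :
    Continuous fun θ => -(a * Real.sin θ) / (X (arcPoint ν κ a θ)).1 :=
  Continuous.div (by fun_prop) (hX.continuousOn.comp_continuous continuous_arcPoint hB).fst
    fun θ => hX.fst_ne_zero (hB θ)

theorem continuous_cyclePoint : Continuous (cyclePoint ν κ ν' κ' a) :=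
  continuous_arcPoint.if_le continuous_arcPoint continuous_const Real.continuous_sin fun _ hθ =>
    (arcPoint_of_sin_eq_zero hθ.symm).trans (arcPoint_of_sin_eq_zero hθ.symm).symm

theorem IsArcField.continuous_cycleRate (hX : IsArcField ν κ a B X) (hY : IsArcField ν' κ' a B Y)
    (hup : ∀ θ, arcPoint ν κ a θ ∈ B) (hdown : ∀ θ, arcPoint ν' κ' a θ ∈ B) :
    Continuous (cycleRate X Y ν κ ν' κ' a) :=
  (hX.continuous_rate hup).if_le (hY.continuous_rate hdown) continuous_const Real.continuous_sin
    fun θ hθ => by simp [← hθ]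

theorem IsArcField.hasDerivAt_cyclePoint_of_pos (hX : IsArcField ν κ a B X) {θ : ℝ}
    (hB : arcPoint ν κ a θ ∈ B) (hθ : 0 < Real.sin θ) : HasDerivAt (cyclePoint ν κ ν' κ' a)
      (cycleRate X Y ν κ ν' κ' a θ • X (cyclePoint ν κ ν' κ' a θ)) θ := by
  rw [cycleRate, if_pos hθ.le, cyclePoint, if_pos hθ.le]
  refine (hX.hasDerivAt_arcPoint hB).congr_of_eventuallyEq ?_
  filter_upwards [Real.continuous_sin.continuousAt.eventually_const_lt hθ] with x hx
  exact if_pos hx.le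

theorem IsArcField.hasDerivAt_cyclePoint_of_neg (hY : IsArcField ν' κ' a B Y) {θ : ℝ}
    (hB : arcPoint ν' κ' a θ ∈ B) (hθ : Real.sin θ < 0) : HasDerivAt (cyclePoint ν κ ν' κ' a)
      (cycleRate X Y ν κ ν' κ' a θ • Y (cyclePoint ν κ ν' κ' a θ)) θ := by
  rw [cycleRate, if_neg hθ.not_ge, cyclePoint, if_neg hθ.not_ge]
  refine (hY.hasDerivAt_arcPoint hB).congr_of_eventuallyEq ?_
  filter_upwards [Real.continuous_sin.continuousAt.eventually_lt_const hθ] with x hx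
  exact if_neg hx.not_ge

theorem IsArcField.cycleRate_pos (hκ : 0 < κ) (hκ' : κ' < 0) (hX : IsArcField ν κ a B X)
    (hY : IsArcField ν' κ' a B Y) {θ : ℝ} (hup : arcPoint ν κ a θ ∈ B)
    (hdown : arcPoint ν' κ' a θ ∈ B) (hθ : Real.sin θ ≠ 0) : 0 < cycleRate X Y ν κ ν' κ' a θ := by
  rcases hθ.lt_or_gt with hneg | hpos
  · rw [cycleRate, if_neg hneg.not_ge]
    exact hY.rate_pos hdown (mul_pos_of_neg_of_neg hκ' hneg)
  · rw [cycleRate, if_pos hpos.le]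
    exact hX.rate_pos hup (mul_pos hκ hpos)

theorem eventually_sin_ne_zero_s19 {θ : ℝ} (hθ : Real.sin θ = 0) : ∀ᶠ x in 𝓝[≠] θ, Real.sin x ≠ 0 :=
  (Real.hasDerivAt_sin θ).eventually_ne fun hcos => by
    simpa [hθ, hcos] using Real.sin_sq_add_cos_sq θ

theorem IsArcField.exists_range_eq_cyclePoint (hκ : 0 < κ) (hκ' : κ' < 0)
    (hX : IsArcField ν κ a B X) (hY : IsArcField ν' κ' a B Y)
    (hup : ∀ θ, arcPoint ν κ a θ ∈ B) (hdown : ∀ θ, arcPoint ν' κ' a θ ∈ B) :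
    ∃ γ, IsCrossingPeriodicOrbit X Y γ ∧ range γ = range (cyclePoint ν κ ν' κ' a) := by
  have ha : a ≠ 0 := hX.radius_ne_zero (hup 0)
  have hsign := sign_cyclePoint_snd (ν := ν) (ν' := ν') hκ hκ' ha
  have hzero : ∀ θ, (cyclePoint ν κ ν' κ' a θ).2 = 0 ↔ Real.sin θ = 0 := fun θ => by
    rw [← sign_eq_zero_iff, hsign, sign_eq_zero_iff]
  have hpos : ∀ θ, 0 < (cyclePoint ν κ ν' κ' a θ).2 ↔ 0 < Real.sin θ := fun θ => by
    rw [← sign_eq_one_iff, hsign, sign_eq_one_iff]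
  have hneg : ∀ θ, (cyclePoint ν κ ν' κ' a θ).2 < 0 ↔ Real.sin θ < 0 := fun θ => by
    rw [← sign_eq_neg_one_iff, hsign, sign_eq_neg_one_iff]
  refine IsCrossingPeriodicOrbit.exists_of_timeChange Real.two_pi_pos continuous_cyclePoint
    (fun θ => by simp [cyclePoint, arcPoint]) ⟨0, Real.pi, ?_⟩
    (hX.continuous_cycleRate hY hup hdown) (fun θ => by simp [cycleRate, arcPoint])
    (fun θ hθ => hX.cycleRate_pos hκ hκ' hY (hup θ) (hdown θ) ((hzero θ).not.1 hθ))
    (fun θ hθ => hX.hasDerivAt_cyclePoint_of_pos (hup θ) ((hpos θ).1 hθ))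
    (fun θ hθ => hY.hasDerivAt_cyclePoint_of_neg (hdown θ) ((hneg θ).1 hθ))
    (fun θ hθ => ?_) (fun θ hθ => ?_)
  · intro h
    have : a = -a := by simpa [cyclePoint, arcPoint] using congrArg Prod.fst h
    exact ha (self_eq_neg.1 this)
  · simpa only [ne_eq, hzero] using eventually_sin_ne_zero_s19 ((hzero θ).1 hθ)
  · have hmem : cyclePoint ν κ ν' κ' a θ ∈ arcCycle ν κ ν' κ' a := by
      rw [cyclePoint]
      split_ifs
      exacts [arcPoint_mem_arcCycle_of_pos hκ θ, arcPoint_mem_arcCycle_of_neg hκ' θ]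
    refine hX.crossing hY ?_ hθ (abs_fst_eq_of_mem_arcCycle hκ.ne' hmem hθ)
    rw [cyclePoint_of_nonpos ((hzero θ).1 hθ).le]
    exact hdown θ

theorem IsArcField.hasUniqueCrossingOrbitIn (hκ : 0 < κ) (hκ' : κ' < 0)
    (hX : IsArcField ν κ a B X) (hY : IsArcField ν' κ' a B Y)
    (hB : arcCycle ν κ ν' κ' a ⊆ B) : HasUniqueCrossingOrbitIn X Y B := by
  have hup : ∀ θ, arcPoint ν κ a θ ∈ B := fun θ => hB (arcPoint_mem_arcCycle_of_pos hκ θ)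
  have hdown : ∀ θ, arcPoint ν' κ' a θ ∈ B := fun θ => hB (arcPoint_mem_arcCycle_of_neg hκ' θ)
  obtain ⟨γ, hγ, hrange⟩ := hX.exists_range_eq_cyclePoint hκ hκ' hY hup hdown
  have hγB : range γ ⊆ B := by
    rw [hrange, range_subset_iff]
    intro θ
    rw [cyclePoint]
    split_ifs
    exacts [hup θ, hdown θ]
  exact ⟨γ, hγ, hγB, fun γ' hγ' hγ'B => (hX.range_eq_arcCycle hκ hκ' hY hγ' hγ'B).trans
    (hX.range_eq_arcCycle hκ hκ' hY hγ hγB).symm⟩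

end Existence

theorem IsCrossingPeriodicOrbit.smul {c : ℝ} (hc : 0 < c) {F G X Y : ℝ × ℝ → ℝ × ℝ}
    {γ : ℝ → ℝ × ℝ} (h : IsCrossingPeriodicOrbit F G γ) (hX : ∀ t, X (c • γ t) = c • F (γ t))
    (hY : ∀ t, Y (c • γ t) = c • G (γ t)) : IsCrossingPeriodicOrbit X Y (c • γ) := by
  obtain ⟨hγ, ⟨T, hT, hper⟩, ⟨t, s, hts⟩, hup, hdown, hdiscrete, hcross⟩ := h
  refine ⟨hγ.const_smul c, ⟨T, hT, hper.comp (c • ·)⟩, ⟨t, s, ?_⟩, ?_, ?_, ?_, ?_⟩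
  · simpa [hc.ne'] using hts
  · intro t ht
    rw [Pi.smul_apply, hX]
    exact (hup t ((smul_pos_iff_of_pos_left hc).1 ht)).const_smul c
  · intro t ht
    rw [Pi.smul_apply, hY]
    exact (hdown t ((smul_neg_iff_of_pos_left hc).1 ht)).const_smul c
  · simpa [hc.ne'] using hdiscrete
  · intro t ht
    have := hcross t (by simpa [hc.ne'] using ht)
    rw [Pi.smul_apply, hX, hY, Prod.smul_snd, Prod.smul_snd, smul_mul_smul_comm]
    exact smul_pos (mul_pos hc hc) this

theorem HasUniqueCrossingOrbitIn.smul {c : ℝ} (hc : 0 < c) {F G X Y : ℝ × ℝ → ℝ × ℝ}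
    {W : Set (ℝ × ℝ)} (h : HasUniqueCrossingOrbitIn F G W)
    (hX : ∀ p ∈ W, X (c • p) = c • F p) (hY : ∀ p ∈ W, Y (c • p) = c • G p) :
    HasUniqueCrossingOrbitIn X Y (c • W) := by
  obtain ⟨γ, hγ, hγW, hunique⟩ := h
  have hmem : ∀ t, γ t ∈ W := fun t => hγW (mem_range_self t)
  have hrange : ∀ (k : ℝ) (β : ℝ → ℝ × ℝ), range (k • β) = k • range β := fun k β =>
    (smul_set_range k β).symm
  refine ⟨c • γ, hγ.smul hc (fun t => hX _ (hmem t)) fun t => hY _ (hmem t), ?_,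
    fun γ' hγ' hγ'W => ?_⟩
  · rw [hrange]
    exact smul_set_mono hγW
  · have hmem' : ∀ t, c⁻¹ • γ' t ∈ W := fun t =>
      (mem_smul_set_iff_inv_smul_mem₀ hc.ne' _ _).1 (hγ'W (mem_range_self t))
    have hconj : ∀ {F X : ℝ × ℝ → ℝ × ℝ}, (∀ p ∈ W, X (c • p) = c • F p) →
        ∀ t, F (c⁻¹ • γ' t) = c⁻¹ • X (γ' t) := fun hX t => by
      rw [eq_inv_smul_iff₀ hc.ne', ← hX _ (hmem' t), smul_inv_smul₀ hc.ne']
    have hγ'' := hunique _ (hγ'.smul (inv_pos.2 hc) (hconj hX) (hconj hY))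
      (range_subset_iff.2 hmem')
    rw [hrange, ← hγ'', hrange, smul_inv_smul₀ hc.ne']

theorem tendsto_mul_nhdsGT_zero (b : ℝ) : Tendsto (fun c => c * b) (𝓝[>] 0) (𝓝 0) :=
  tendsto_nhdsWithin_of_tendsto_nhds (Continuous.tendsto' (by fun_prop) _ _ (zero_mul b))

section Perturbation

variable {E F : Type*} [NormedAddCommGroup E] [NormedSpace ℝ E] [NormedAddCommGroup F]
  [NormedSpace ℝ F]

theorem fderiv_smul_comp_inv_smul {c : ℝ} (hc : c ≠ 0) {f : E → F} (hf : Differentiable ℝ f)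
    (p : E) : fderiv ℝ (fun q => c • f (c⁻¹ • q)) p = fderiv ℝ f (c⁻¹ • p) := by
  rw [fderiv_fun_const_smul (by fun_prop), fderiv_comp_smul, smul_inv_smul₀ hc]

variable (E) in
theorem exists_cutoff_norm_fderiv_le [FiniteDimensional ℝ E] : ∃ C, 0 ≤ C ∧ ∀ ρ > 0, ∃ χ : E → ℝ,
    ContDiff ℝ 1 χ ∧ (∀ p, ‖χ p‖ ≤ 1) ∧ (∀ p, ‖p‖ ≤ ρ / 2 → χ p = 1) ∧
      (∀ p, ρ ≤ ‖p‖ → χ p = 0) ∧ ∀ p, ‖fderiv ℝ χ p‖ ≤ C / ρ := by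
  let χ : ContDiffBump (0 : E) := ⟨1 / 2, 1, by norm_num, by norm_num⟩
  have hχ : ContDiff ℝ 1 χ := χ.contDiff
  obtain ⟨C, hC⟩ := (hχ.continuous_fderiv one_ne_zero).bounded_above_of_compact_support
    (χ.hasCompactSupport.fderiv (𝕜 := ℝ))
  refine ⟨C, (norm_nonneg _).trans (hC 0), fun ρ hρ => ⟨fun p => χ (ρ⁻¹ • p),
    hχ.comp (contDiff_const_smul ρ⁻¹), fun p => ?_, fun p hp => ?_, fun p hp => ?_, fun p => ?_⟩⟩
  · rw [Real.norm_of_nonneg χ.nonneg]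
    exact χ.le_one
  · refine χ.one_of_mem_closedBall ?_
    rw [mem_closedBall_zero_iff, norm_smul_of_nonneg (by positivity), inv_mul_le_iff₀ hρ]
    exact hp.trans_eq (div_eq_mul_one_div ρ 2)
  · refine χ.zero_of_le_dist ?_
    rw [dist_zero_right, norm_smul_of_nonneg (by positivity), le_inv_mul_iff₀ hρ]
    exact (mul_one ρ).trans_le hp
  · rw [fderiv_comp_smul, norm_smul, Real.norm_of_nonneg (by positivity), div_eq_inv_mul]
    gcongr
    exact hC _

theorem norm_fderiv_smul_le {χ : E → ℝ} {f : E → F} {p : E} {C ρ ε : ℝ} (hρ : 0 < ρ)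
    (hχ : DifferentiableAt ℝ χ p) (hf : DifferentiableAt ℝ f p) (hχp : ‖χ p‖ ≤ 1)
    (hdχ : ‖fderiv ℝ χ p‖ ≤ C / ρ) (hfp : ‖f p‖ ≤ ε * ρ) (hdf : ‖fderiv ℝ f p‖ ≤ ε) :
    ‖fderiv ℝ (fun q => χ q • f q) p‖ ≤ (1 + C) * ε := by
  rw [fderiv_fun_smul hχ hf]
  calc ‖χ p • fderiv ℝ f p + (fderiv ℝ χ p).smulRight (f p)‖
      ≤ ‖χ p‖ * ‖fderiv ℝ f p‖ + ‖fderiv ℝ χ p‖ * ‖f p‖ := by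
        rw [← norm_smul, ← ContinuousLinearMap.norm_smulRight_apply]
        exact norm_add_le _ _
    _ ≤ 1 * ε + C / ρ * (ε * ρ) := by
        gcongr
        exact (norm_nonneg _).trans hdχ
    _ = (1 + C) * ε := by
        field_simp

variable (E F) in
/-- The constant does not depend on the radius because the derivative of the cutoff, of order `ρ⁻¹`,
multiplies `f`, which is at most `ε * ρ` on the ball. -/
theorem exists_cutoff_extension [FiniteDimensional ℝ E] :
    ∃ K : ℝ, 0 ≤ K ∧ ∀ {U : Set E} {f : E → F} {ρ ε : ℝ}, IsOpen U → ContDiffOn ℝ 1 f U →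
      0 < ρ → Metric.closedBall 0 ρ ⊆ U → f 0 = 0 →
      (∀ p ∈ Metric.closedBall 0 ρ, ‖fderiv ℝ f p‖ ≤ ε) →
      ∃ g : E → F, ContDiffOn ℝ 1 g U ∧ EqOn g f (Metric.ball 0 (ρ / 2)) ∧
        ∀ p ∈ U, ‖g p‖ ≤ ε * ρ ∧ ‖fderiv ℝ g p‖ ≤ K * ε := by
  obtain ⟨C, hC, hcutoff⟩ := exists_cutoff_norm_fderiv_le E
  refine ⟨1 + C, by positivity, fun {U f ρ ε} hU hf hρ hρU hf0 hdf => ?_⟩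
  obtain ⟨χ, hχ, hχ_le, hχ_one, hχ_zero, hdχ⟩ := hcutoff ρ hρ
  have hdiff : ∀ p ∈ U, DifferentiableAt ℝ f p := fun p hp =>
    (hf.contDiffAt (hU.mem_nhds hp)).differentiableAt one_ne_zero
  have hε : 0 ≤ ε := (norm_nonneg _).trans (hdf 0 (Metric.mem_closedBall_self hρ.le))
  have hf_le : ∀ p ∈ Metric.closedBall 0 ρ, ‖f p‖ ≤ ε * ρ := fun p hp => by
    have := (convex_closedBall 0 ρ).norm_image_sub_le_of_norm_fderiv_le
      (fun q hq => hdiff q (hρU hq)) hdf (Metric.mem_closedBall_self hρ.le) hp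
    rw [hf0, sub_zero, sub_zero] at this
    exact this.trans (by gcongr; exact mem_closedBall_zero_iff.1 hp)
  refine ⟨fun p => χ p • f p, hχ.contDiffOn.smul hf, fun p hp => ?_, fun p hp => ?_⟩
  · simp only [hχ_one p (mem_ball_zero_iff.1 hp).le, one_smul]
  by_cases hpρ : p ∈ Metric.closedBall 0 ρ
  · refine ⟨?_, norm_fderiv_smul_le hρ (hχ.differentiable one_ne_zero p) (hdiff p hp) (hχ_le p)
      (hdχ p) (hf_le p hpρ) (hdf p hpρ)⟩
    rw [norm_smul]
    exact (mul_le_of_le_one_left (norm_nonneg _) (hχ_le p)).trans (hf_le p hpρ)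
  · have hzero : (fun p => χ p • f p) =ᶠ[𝓝 p] fun _ => 0 := by
      filter_upwards [Metric.isClosed_closedBall.isOpen_compl.mem_nhds hpρ] with q hq
      rw [mem_compl_iff, mem_closedBall_zero_iff, not_le] at hq
      rw [hχ_zero q hq.le, zero_smul]
    have hp_zero : χ p • f p = 0 := hzero.eq_of_nhds
    rw [hzero.fderiv_eq]
    simp only [hp_zero, norm_zero, fderiv_fun_const, Pi.zero_apply]
    exact ⟨by positivity, by positivity⟩

variable (E F) in
theorem exists_contDiffOn_eqOn_ball [FiniteDimensional ℝ E] :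
    ∃ K : ℝ, 0 ≤ K ∧ ∀ {U : Set E} {X G : E → F} {ρ ε : ℝ}, IsOpen U → ContDiffOn ℝ 1 X U →
      ContDiffOn ℝ 1 G U → 0 < ρ → Metric.closedBall 0 ρ ⊆ U →
      (∀ p ∈ Metric.closedBall 0 ρ, ‖fderiv ℝ G p - fderiv ℝ X p‖ ≤ ε) →
      ∃ X' : E → F, ContDiffOn ℝ 1 X' U ∧ EqOn X' G (Metric.ball 0 (ρ / 2)) ∧
        ∀ p ∈ U, ‖X p - X' p‖ ≤ ‖G 0 - X 0‖ + ε * ρ ∧ ‖fderiv ℝ X p - fderiv ℝ X' p‖ ≤ K * ε := by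
  obtain ⟨K, hK, hextend⟩ := exists_cutoff_extension E F
  refine ⟨K, hK, fun {U X G ρ ε} hU hX hG hρ hρU hGX => ?_⟩
  have hdiff : ∀ {f : E → F}, ContDiffOn ℝ 1 f U → ∀ p ∈ U, DifferentiableAt ℝ f p :=
    fun hf p hp => (hf.contDiffAt (hU.mem_nhds hp)).differentiableAt one_ne_zero
  obtain ⟨g, hg, hgeq, hgle⟩ := hextend (f := fun p => G p - X p - (G 0 - X 0)) hU
    ((hG.sub hX).sub contDiffOn_const) hρ hρU (sub_self _) fun p hp => by
      rw [fderiv_sub_const, fderiv_fun_sub (hdiff hG p (hρU hp)) (hdiff hX p (hρU hp))]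
      exact hGX p hp
  refine ⟨fun p => X p + (G 0 - X 0) + g p, (hX.add contDiffOn_const).add hg, fun p hp => ?_,
    fun p hp => ⟨?_, ?_⟩⟩
  · simp only [hgeq hp]
    abel
  · simp only [add_assoc, sub_add_cancel_left, norm_neg]
    exact (norm_add_le _ _).trans (by gcongr; exact (hgle p hp).1)
  · rw [fderiv_fun_add ((hdiff hX p hp).add_const _) (hdiff hg p hp), fderiv_add_const,
      sub_add_cancel_left, norm_neg]
    exact (hgle p hp).2

theorem exists_perturbation_eq_rescaling [FiniteDimensional ℝ E] {U : Set E} {X : E → F}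
    (hU : IsOpen U) (h0 : 0 ∈ U) (hX : ContDiffOn ℝ 1 X U) (hX0 : X 0 = 0) {δ : ℝ} (hδ : 0 < δ) :
    ∃ ε > 0, ∀ {G : E → F} {s : ℝ}, ContDiff ℝ 1 G → 0 < s →
      (∀ q ∈ Metric.closedBall 0 s, ‖fderiv ℝ G q - fderiv ℝ X 0‖ ≤ ε) →
      ∀ᶠ c : ℝ in 𝓝[>] 0, ∃ X' : E → F, ContDiffOn ℝ 1 X' U ∧
        (∀ p ∈ U, ‖X p - X' p‖ + ‖fderiv ℝ X p - fderiv ℝ X' p‖ < δ) ∧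
        ∀ p ∈ Metric.ball 0 (s / 2), X' (c • p) = c • G p := by
  obtain ⟨K, hK, hglue⟩ := exists_contDiffOn_eqOn_ball E F
  obtain ⟨ε, hε, hKε⟩ : ∃ ε > 0, K * (2 * ε) < δ / 2 :=
    ⟨δ / (4 * (K + 1)), by positivity, by field_simp; linarith⟩
  have hcont : ContinuousAt (fderiv ℝ X) 0 :=
    (hX.continuousOn_fderiv_of_isOpen hU le_rfl).continuousAt (hU.mem_nhds h0)
  obtain ⟨r, hr, hrU⟩ := Metric.nhds_basis_closedBall.mem_iff.1
    (inter_mem (hU.mem_nhds h0) (hcont.preimage_mem_nhds (Metric.closedBall_mem_nhds _ hε)))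
  refine ⟨ε, hε, fun {G s} hG hs hGX => ?_⟩
  have hsmall : Tendsto (fun c : ℝ => ‖c • G 0‖ + 2 * ε * (c * s)) (𝓝[>] 0) (𝓝 0) :=
    tendsto_nhdsWithin_of_tendsto_nhds
      (Continuous.tendsto' (by fun_prop) _ _ (by simp))
  filter_upwards [self_mem_nhdsWithin, hsmall.eventually_lt_const (half_pos hδ),
    (tendsto_mul_nhdsGT_zero s).eventually_le_const hr] with c (hc : 0 < c) hcδ hcr
  have hsub := (Metric.closedBall_subset_closedBall (x := (0 : E)) hcr).trans hrU
  obtain ⟨X', hX', heq, hle⟩ := hglue (G := fun p => c • G (c⁻¹ • p)) (ε := 2 * ε) hU hX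
    ((hG.comp (contDiff_const_smul c⁻¹)).const_smul c).contDiffOn (mul_pos hc hs)
    (fun p hp => (hsub hp).1) fun p hp => by
      have hq : c⁻¹ • p ∈ Metric.closedBall 0 s := by
        rw [mem_closedBall_zero_iff, norm_smul_of_nonneg (by positivity), inv_mul_le_iff₀ hc]
        exact mem_closedBall_zero_iff.1 hp
      rw [fderiv_smul_comp_inv_smul hc.ne' (hG.differentiable one_ne_zero), two_mul]
      exact (norm_sub_le_norm_sub_add_norm_sub _ (fderiv ℝ X 0) _).trans
        (add_le_add (hGX _ hq) (mem_closedBall_iff_norm'.1 (hsub hp).2))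
  refine ⟨X', hX', fun p hp => ?_, fun p hp => ?_⟩
  · have hle₁ := (hle p hp).1
    have hle₂ := (hle p hp).2
    rw [smul_zero, hX0, sub_zero] at hle₁
    linarith
  · have hcp : c • p ∈ Metric.ball 0 (c * s / 2) := by
      rw [mem_ball_zero_iff, norm_smul_of_nonneg hc.le, mul_div_assoc]
      exact mul_lt_mul_of_pos_left (mem_ball_zero_iff.1 hp) hc
    simp only [heq hcp, inv_smul_smul₀ hc.ne']

end Perturbation

/-- A vector field with horizontal velocity `σ + (A p).1` along which `arcDefect ν κ a` grows at the
rate `V' = V`; the constants are tuned in `fderiv_arcModel_zero` so that its derivative at the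
origin is close to `A` when `a` is small. -/
def arcModel (A : ℝ × ℝ →L[ℝ] ℝ × ℝ) (σ ν κ a : ℝ) (p : ℝ × ℝ) : ℝ × ℝ :=
  (σ + (A p).1, arcVelocity ν κ a (σ + (A p).1) p)

section Model

variable {A : ℝ × ℝ →L[ℝ] ℝ × ℝ} {σ ν κ a : ℝ}

theorem contDiff_uncurry_arcModel : ContDiff ℝ 1 (Function.uncurry (arcModel A σ ν κ)) := by
  unfold Function.uncurry arcModel arcVelocity
  fun_prop

theorem contDiff_arcModel : ContDiff ℝ 1 (arcModel A σ ν κ a) :=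
  contDiff_uncurry_arcModel.comp (contDiff_prodMk_right a)

theorem fderiv_arcModel_zero (hν : 1 - ν * σ = (A (0, 1)).2) (hκ : -2 * κ * σ = (A (1, 0)).2) :
    fderiv ℝ (arcModel A σ ν κ 0) 0 = A := by
  have hv : HasFDerivAt (fun p => σ + (A p).1) ((ContinuousLinearMap.fst ℝ ℝ ℝ).comp A) 0 :=
    (A.hasFDerivAt.fst).const_add σ
  have hx : HasFDerivAt (fun p : ℝ × ℝ => p.1) (ContinuousLinearMap.fst ℝ ℝ ℝ) 0 := hasFDerivAt_fst
  have hy : HasFDerivAt (fun p : ℝ × ℝ => p.2) (ContinuousLinearMap.snd ℝ ℝ ℝ) 0 := hasFDerivAt_snd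
  have hsnd := (((hv.const_mul ν).const_sub 1).mul hy).sub
    (((hx.const_mul ν).neg.exp.const_mul κ).mul
      (((hx.pow 2).const_sub (0 ^ 2)).add ((hx.const_mul 2).mul hv)))
  refine (hv.prodMk hsnd).fderiv.trans (ContinuousLinearMap.ext fun q => Prod.ext rfl ?_)
  have hA : (A q).2 = q.1 * (A (1, 0)).2 + q.2 * (A (0, 1)).2 := by
    conv_lhs => rw [show q = q.1 • (1, 0) + q.2 • (0, 1) by simp]
    simp only [map_add, map_smul, Prod.snd_add, Prod.smul_snd, smul_eq_mul]
  rw [hA, ← hν, ← hκ]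
  simp
  ring

theorem continuous_fderiv_arcModel :
    Continuous fun z : ℝ × ℝ × ℝ => fderiv ℝ (arcModel A σ ν κ z.1) z.2 :=
  (ContDiff.fderiv (n := 0) (contDiff_uncurry_arcModel.comp (contDiff_fst.fst.prodMk contDiff_snd) :
    ContDiff ℝ 1 (Function.uncurry fun z : ℝ × ℝ × ℝ => arcModel A σ ν κ z.1))
    contDiff_snd (zero_add 1).le).continuous

theorem eventually_arcModel_close (hσ : σ ≠ 0) (hν : 1 - ν * σ = (A (0, 1)).2)
    (hκ : -2 * κ * σ = (A (1, 0)).2) {ε : ℝ} (hε : 0 < ε) :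
    ∀ᶠ s in 𝓝[>] 0, ∀ᶠ a in 𝓝 0, ∀ q ∈ Metric.closedBall 0 s,
      ‖fderiv ℝ (arcModel A σ ν κ a) q - A‖ ≤ ε ∧ 0 < σ * (σ + (A q).1) := by
  have hclose : ∀ᶠ z : ℝ × ℝ × ℝ in 𝓝 0, ‖fderiv ℝ (arcModel A σ ν κ z.1) z.2 - A‖ ≤ ε := by
    have hcont : Continuous fun z : ℝ × ℝ × ℝ => ‖fderiv ℝ (arcModel A σ ν κ z.1) z.2 - A‖ :=
      (continuous_fderiv_arcModel.sub continuous_const).norm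
    refine hcont.continuousAt.eventually_le_const ?_
    simpa only [Prod.fst_zero, Prod.snd_zero, fderiv_arcModel_zero hν hκ, sub_self, norm_zero]
  have hspeed : ∀ᶠ z : ℝ × ℝ × ℝ in 𝓝 0, 0 < σ * (σ + (A z.2).1) := by
    have hcont : Continuous fun z : ℝ × ℝ × ℝ => σ * (σ + (A z.2).1) := by fun_prop
    exact hcont.continuousAt.eventually_const_lt (by simp [hσ])
  obtain ⟨r, hr, hsub⟩ := Metric.nhds_basis_closedBall.eventually_iff.1 (hclose.and hspeed)
  filter_upwards [Ioc_mem_nhdsGT hr] with s hs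
  filter_upwards [Metric.closedBall_mem_nhds 0 hr] with a ha q hq
  have hmem : (a, q) ∈ Metric.closedBall 0 r := by
    rw [← Prod.mk_zero_zero, ← closedBall_prod_same]
    exact ⟨ha, Metric.closedBall_subset_closedBall hs.2 hq⟩
  simpa only using hsub hmem

theorem isArcField_arcModel {B : Set (ℝ × ℝ)} (ha : κ * a * σ < 0)
    (hB : ∀ p ∈ B, 0 < σ * (σ + (A p).1)) : IsArcField ν κ a B (arcModel A σ ν κ a) where
  continuousOn := contDiff_arcModel.continuous.continuousOn
  snd_eq _ _ := rfl
  mul_fst_neg p hp := by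
    have hσ : σ ≠ 0 := right_ne_zero_of_mul ha.ne
    rw [show κ * a * (arcModel A σ ν κ a p).1 = κ * a * σ * (σ * (σ + (A p).1)) / σ ^ 2 by
      rw [arcModel]; field_simp]
    exact div_neg_of_neg_of_pos (mul_neg_of_neg_of_pos ha (hB p hp)) (by positivity)

theorem frequently_mul_pos {j : ℝ} (hj : j ≠ 0) : ∃ᶠ a in 𝓝 0, 0 < a * j := by
  refine (tendsto_mul_nhdsGT_zero j).frequently (Eventually.frequently ?_)
  filter_upwards [self_mem_nhdsWithin] with ξ (hξ : 0 < ξ)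
  rw [mul_assoc]
  exact mul_pos hξ (mul_self_pos.2 hj)

theorem exists_model_hasUniqueCrossingOrbitIn {A A' : ℝ × ℝ →L[ℝ] ℝ × ℝ}
    (hAA' : 0 < (A (1, 0)).2 * (A' (1, 0)).2) {ε ε' : ℝ} (hε : 0 < ε) (hε' : 0 < ε') :
    ∃ s > 0, ∃ F G : ℝ × ℝ → ℝ × ℝ, ContDiff ℝ 1 F ∧ ContDiff ℝ 1 G ∧
      (∀ q ∈ Metric.closedBall 0 s, ‖fderiv ℝ F q - A‖ ≤ ε) ∧
      (∀ q ∈ Metric.closedBall 0 s, ‖fderiv ℝ G q - A'‖ ≤ ε') ∧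
      HasUniqueCrossingOrbitIn F G (Metric.ball 0 (s / 2)) := by
  set j := (A (1, 0)).2
  set j' := (A' (1, 0)).2
  have hj : j ≠ 0 := left_ne_zero_of_mul hAA'.ne'
  obtain ⟨ν, hν⟩ : ∃ ν, 1 - ν * -j = (A (0, 1)).2 := ⟨((A (0, 1)).2 - 1) / j, by field_simp; ring⟩
  obtain ⟨ν', hν'⟩ : ∃ ν', 1 - ν' * j = (A' (0, 1)).2 :=
    ⟨(1 - (A' (0, 1)).2) / j, by field_simp; ring⟩
  obtain ⟨κ', hκ'⟩ : ∃ κ', -2 * κ' * j = j' := ⟨-j' / (2 * j), by field_simp⟩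
  have hκ'_neg : κ' < 0 := by
    have : 0 < -2 * κ' * j ^ 2 := by linear_combination hAA' - j * hκ'
    have : 0 < -2 * κ' := pos_of_mul_pos_left this (sq_nonneg j)
    linarith
  obtain ⟨s, ⟨hF, hG⟩, hs : 0 < s⟩ :=
    (((eventually_arcModel_close (κ := 1 / 2) (neg_ne_zero.2 hj) hν (by ring) hε).and
      (eventually_arcModel_close hj hν' hκ' hε')).and self_mem_nhdsWithin).exists
  obtain ⟨a, ha, ⟨hFa, hGa⟩, hcycle⟩ := ((frequently_mul_pos hj).and_eventually
    ((hF.and hG).and (eventually_arcCycle_subset_ball (ν := ν) (ν' := ν')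
      (one_half_pos (α := ℝ)) hκ'_neg (half_pos hs)))).exists
  have hball : Metric.ball 0 (s / 2) ⊆ Metric.closedBall (0 : ℝ × ℝ) s :=
    Metric.ball_subset_closedBall.trans (Metric.closedBall_subset_closedBall (half_le_self hs.le))
  refine ⟨s, hs, _, _, contDiff_arcModel, contDiff_arcModel, fun q hq => (hFa q hq).1,
    fun q hq => (hGa q hq).1, IsArcField.hasUniqueCrossingOrbitIn one_half_pos hκ'_neg
      (isArcField_arcModel (by linarith) fun q hq => (hFa q (hball hq)).2)
      (isArcField_arcModel ?_ fun q hq => (hGa q (hball hq)).2) hcycle⟩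
  rw [mul_assoc]
  exact mul_neg_of_neg_of_pos hκ'_neg ha

end Model

theorem stmt19_general {U : Set (ℝ × ℝ)} {X Y : ℝ × ℝ → ℝ × ℝ} (hU : IsOpen U) (h0 : (0, 0) ∈ U)
    (hX : ContDiffOn ℝ 1 X U) (hY : ContDiffOn ℝ 1 Y U) (hX0 : X (0, 0) = (0, 0))
    (hY0 : Y (0, 0) = (0, 0)) (hjac : 0 < jac21 X * jac21 Y) {δ : ℝ} (hδ : 0 < δ) :
    ∃ Xt Yt : ℝ × ℝ → ℝ × ℝ, ContDiffOn ℝ 1 Xt U ∧ ContDiffOn ℝ 1 Yt U ∧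
      (∀ p ∈ U, ‖X p - Xt p‖ + ‖fderiv ℝ X p - fderiv ℝ Xt p‖ < δ) ∧
      (∀ p ∈ U, ‖Y p - Yt p‖ + ‖fderiv ℝ Y p - fderiv ℝ Yt p‖ < δ) ∧
      ∃ γ : ℝ → ℝ × ℝ, IsCrossingPeriodicOrbit Xt Yt γ ∧ range γ ⊆ Metric.ball (0, 0) δ ∧
        ∃ V : Set (ℝ × ℝ), IsOpen V ∧ range γ ⊆ V ∧
          ∀ γ' : ℝ → ℝ × ℝ, IsCrossingPeriodicOrbit Xt Yt γ' → range γ' ⊆ V →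
            range γ' = range γ := by
  obtain ⟨ε, hε, hpertX⟩ := exists_perturbation_eq_rescaling hU h0 hX hX0 hδ
  obtain ⟨ε', hε', hpertY⟩ := exists_perturbation_eq_rescaling hU h0 hY hY0 hδ
  obtain ⟨s, hs, F, G, hF, hG, hdF, hdG, hcycle⟩ :=
    exists_model_hasUniqueCrossingOrbitIn hjac hε hε'
  have hradius : ∀ᶠ c : ℝ in 𝓝[>] 0, c * (s / 2) ≤ δ :=
    (tendsto_mul_nhdsGT_zero _).eventually_le_const hδ
  obtain ⟨c, ⟨⟨⟨Xt, hXt, hXδ, hXF⟩, Yt, hYt, hYδ, hYG⟩, hcδ⟩, hc : 0 < c⟩ :=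
    ((((hpertX hF hs hdF).and (hpertY hG hs hdG)).and hradius).and self_mem_nhdsWithin).exists
  obtain ⟨γ, hγ, hrange, hunique⟩ := hcycle.smul hc hXF hYG
  rw [smul_ball hc.ne', smul_zero, Real.norm_of_nonneg hc.le] at hrange hunique
  exact ⟨Xt, Yt, hXt, hYt, hXδ, hYδ, γ, hγ, hrange.trans (Metric.ball_subset_ball hcδ),
    _, Metric.isOpen_ball, hrange, hunique⟩

/-- For every `Z = (X, Y) ∈ Ω₀` and every `δ > 0` there is a `C¹`-`δ`-small perturbation
`Z̃ = (X̃, Ỹ)` of `Z` (measured on a fixed closed ball around the origin) possessing an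
isolated crossing periodic orbit — a crossing limit cycle — inside the ball of radius `δ`
around the origin. -/
theorem stmt19 (U : Set (ℝ × ℝ)) (X Y : ℝ × ℝ → ℝ × ℝ) (hZ : InOmega0 U X Y) :
    ∃ r > (0 : ℝ), Metric.closedBall ((0, 0) : ℝ × ℝ) r ⊆ U ∧
      ∀ δ : ℝ, 0 < δ → ∃ Xt Yt : ℝ × ℝ → ℝ × ℝ,
        ContDiffOn ℝ 1 Xt U ∧ ContDiffOn ℝ 1 Yt U ∧
        (∀ p ∈ Metric.closedBall ((0, 0) : ℝ × ℝ) r,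
          ‖X p - Xt p‖ + ‖fderiv ℝ X p - fderiv ℝ Xt p‖ < δ) ∧
        (∀ p ∈ Metric.closedBall ((0, 0) : ℝ × ℝ) r,
          ‖Y p - Yt p‖ + ‖fderiv ℝ Y p - fderiv ℝ Yt p‖ < δ) ∧
        ∃ γ : ℝ → ℝ × ℝ, IsCrossingPeriodicOrbit Xt Yt γ ∧
          Set.range γ ⊆ Metric.ball ((0, 0) : ℝ × ℝ) δ ∧
          ∃ V : Set (ℝ × ℝ), IsOpen V ∧ Set.range γ ⊆ V ∧
            ∀ γ' : ℝ → ℝ × ℝ, IsCrossingPeriodicOrbit Xt Yt γ' →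
              Set.range γ' ⊆ V → Set.range γ' = Set.range γ := by
  obtain ⟨hU, h0, hX, hY, hX0, hY0, -, hjac⟩ := hZ
  obtain ⟨r, hr, hrU⟩ := Metric.nhds_basis_closedBall.mem_iff.1 (hU.mem_nhds h0)
  refine ⟨r, hr, hrU, fun δ hδ => ?_⟩
  obtain ⟨Xt, Yt, hXt, hYt, hXδ, hYδ, hcycle⟩ := stmt19_general hU h0 hX hY hX0 hY0 hjac hδ
  exact ⟨Xt, Yt, hXt, hYt, fun p hp => hXδ p (hrU hp), fun p hp => hYδ p (hrU hp), hcycle⟩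
end
end
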